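/- Let 𝒫 = (P, μ, σ) be an n-dimensional system and for T ≥ 0 let u_T^can denote the μ-canonical distribution of temperature T; set u_∞^can := 1_P, the constant function 1. Then the map [0,∞] → L^p(P, μ), T ↦ u_T^can, is continuous for every p ∈ [1, n/(n−1)) (in particular u_T^can → 1_P in L^p as T → ∞), the functions T ↦ F_𝒫(T, u_T^can), T ↦ U_𝒫(u_T^can), T ↦ S_𝒫(u_T^can) are continuous on [0,∞), and moreover lim_{T→∞} F_𝒫(T, u_T^can) = lim_{T→∞} U_𝒫(u_T^can) = U_𝒫(1_P) and lim_{T→∞} T·S_𝒫(u_T^can) = 0. -/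

import Mathlib

open MeasureTheory Filter Topology
open scoped ENNReal NNReal

noncomputable section

abbrev Euc (n : ℕ) := EuclideanSpace ℝ (Fin n)

/-- A `[0,∞]`-valued function on a set `K ⊆ ℝⁿ` is convex if
`u((1−t)x+ty) ≤ (1−t)u(x)+t·u(y)` in `[0,∞]` for all `x, y ∈ K` and `t ∈ [0,1]`. -/
def ConvexFnOn {n : ℕ} (K : Set (Euc n)) (u : Euc n → ℝ≥0∞) : Prop :=
  ∀ ⦃x⦄, x ∈ K → ∀ ⦃y⦄, y ∈ K → ∀ ⦃t : ℝ⦄, 0 ≤ t → t ≤ 1 →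
    u ((1 - t) • x + t • y) ≤ ENNReal.ofReal (1 - t) * u x + ENNReal.ofReal t * u y

/-- A polytope: a compact set with nonempty interior which is a finite
intersection of closed half-spaces (cut out by nonzero affine functions). -/
def IsPolytope {n : ℕ} (P : Set (Euc n)) : Prop :=
  IsCompact P ∧ (interior P).Nonempty ∧
    ∃ (m : ℕ) (L : Fin m → (Euc n →ᵃ[ℝ] ℝ)),
      (∀ k, L k ≠ 0) ∧ P = ⋂ k, {x | 0 ≤ L k x}

/-- `F` is a face of `P`: the intersection of `P` with the zero locus of a
nonzero affine function that is nonnegative on `P`. -/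
def IsFaceOf {n : ℕ} (P F : Set (Euc n)) : Prop :=
  ∃ ℓ : Euc n →ᵃ[ℝ] ℝ, ℓ ≠ 0 ∧ (∀ y ∈ P, 0 ≤ ℓ y) ∧ F = {y ∈ P | ℓ y = 0}

/-- A facet: a face spanning an affine subspace of dimension `n − 1`. -/
def IsFacetOf {n : ℕ} (P F : Set (Euc n)) : Prop :=
  IsFaceOf P F ∧ Module.finrank ℝ (vectorSpan ℝ F) + 1 = n

/-- A simple polytope: every vertex lies on exactly `n` facets. -/
def IsSimplePolytope {n : ℕ} (P : Set (Euc n)) : Prop :=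
  IsPolytope P ∧ ∀ v : Euc n, IsFaceOf P {v} →
    {F : Set (Euc n) | IsFacetOf P F ∧ v ∈ F}.ncard = n

/-- An `n`-dimensional system `𝒫 = (P, μ, σ)`: a simple polytope `P ⊆ ℝⁿ`, a flat
measure `μ` on `P` (a positive constant multiple of Lebesgue measure restricted
to `P`), and a flat measure `σ` on `∂P` (supported on the boundary and, on each
facet, a positive constant multiple of `(n−1)`-dimensional Hausdorff measure). -/
structure NSystem (n : ℕ) where
  P : Set (Euc n)
  μ : Measure (Euc n)
  σ : Measure (Euc n)
  simple : IsSimplePolytope P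
  flat : ∃ c : ℝ, 0 < c ∧ μ = ENNReal.ofReal c • volume.restrict P
  bdry_supp : σ (frontier P)ᶜ = 0
  flat_bdry : ∀ F : Set (Euc n), IsFacetOf P F →
    ∃ c : ℝ, 0 < c ∧ σ.restrict F =
      ENNReal.ofReal c • (Measure.hausdorffMeasure ((n : ℝ) - 1)).restrict F

/-- `y log y`, computed via the real value of `y ∈ [0,∞]`. -/
def xlogx (y : ℝ≥0∞) : ℝ := y.toReal * Real.log y.toReal

/-- `∫_A u log u dμ ∈ (−∞, ∞]`, as an extended real number. -/
def entOn {n : ℕ} (μ : Measure (Euc n)) (A : Set (Euc n)) (u : Euc n → ℝ≥0∞) : EReal :=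
  ((∫⁻ x in A, ENNReal.ofReal (xlogx (u x)) ∂μ : ℝ≥0∞) : EReal)
    - ((∫⁻ x in A, ENNReal.ofReal (-(xlogx (u x))) ∂μ : ℝ≥0∞) : EReal)

/-- `u : P → (0,∞]` is log-convex: `u((1−t)x+ty) ≤ u(x)^{1−t} u(y)^t`. -/
def LogConvexOn {n : ℕ} (P : Set (Euc n)) (u : Euc n → ℝ≥0∞) : Prop :=
  ∀ ⦃x⦄, x ∈ P → ∀ ⦃y⦄, y ∈ P → ∀ ⦃t : ℝ⦄, 0 ≤ t → t ≤ 1 →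
    u ((1 - t) • x + t • y) ≤ u x ^ (1 - t) * u y ^ t

/-- `ℳ^{exp,p}(P)`: lower semi-continuous log-convex `u : P → (0,∞]` with
`∫_P u dμ = μ(P)` and `∫_P u^p dμ < ∞`. -/
def MExp {n : ℕ} (S : NSystem n) (p : ℝ) : Set (Euc n → ℝ≥0∞) :=
  {u | LowerSemicontinuousOn u S.P ∧ (∀ x ∈ S.P, 0 < u x) ∧ LogConvexOn S.P u ∧
    (∫⁻ x in S.P, u x ∂S.μ) = S.μ S.P ∧ (∫⁻ x in S.P, u x ^ p ∂S.μ) < ⊤}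

/-- The nonequilibrium entropy `S_𝒫(u) = −(1/μ(P)) ∫_P u log u dμ ∈ [−∞, 0]`. -/
def Spf {n : ℕ} (S : NSystem n) (u : Euc n → ℝ≥0∞) : EReal :=
  (((S.μ S.P).toReal⁻¹ : ℝ) : EReal) *
    (((∫⁻ x in S.P, ENNReal.ofReal (-(xlogx (u x))) ∂S.μ : ℝ≥0∞) : EReal)
      - ((∫⁻ x in S.P, ENNReal.ofReal (xlogx (u x)) ∂S.μ : ℝ≥0∞) : EReal))

/-- The internal μ-energy `U_𝒫(u) = (1/μ(P)) ∫_{∂P} u dσ ∈ (0, ∞]`. -/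
def Upf {n : ℕ} (S : NSystem n) (u : Euc n → ℝ≥0∞) : ℝ≥0∞ :=
  (S.μ S.P)⁻¹ * ∫⁻ x in frontier S.P, u x ∂S.σ

/-- The free μ-energy `F_𝒫(T,u) = U_𝒫(u) − T·S_𝒫(u)` if `S_𝒫(u) > −∞`, else `∞`. -/
def Fpf {n : ℕ} (S : NSystem n) (T : ℝ) (u : Euc n → ℝ≥0∞) : EReal :=
  if Spf S u = ⊥ then ⊤ else (Upf S u : EReal) - (T : EReal) * Spf S u

/-- `u` is the μ-canonical distribution of temperature `T ≥ 0`: for `T > 0` the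
minimizer of `F_𝒫(T,·)` on `ℳ^{exp,1}(P)`; for `T = 0` the minimizer of `U_𝒫`
maximizing `S_𝒫` among all minimizers of `U_𝒫`. -/
def IsCanonical {n : ℕ} (S : NSystem n) (T : ℝ) (u : Euc n → ℝ≥0∞) : Prop :=
  u ∈ MExp S 1 ∧
  (0 < T → ∀ u' ∈ MExp S 1, Fpf S T u ≤ Fpf S T u') ∧
  (T = 0 → (∀ u' ∈ MExp S 1, Upf S u ≤ Upf S u') ∧
    ∀ u' ∈ MExp S 1, (∀ u'' ∈ MExp S 1, Upf S u' ≤ Upf S u'') → Spf S u' ≤ Spf S u)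

/-!
By convexity along the rays from an interior point of `P`, the boundary energy `U_𝒫` of a convex
function controls its `L^q` norms for `q < n / (n - 1)`. A sequence of bounded energy has a
subsequence converging pointwise in the interior of `P`, hence, by the bound in `L^q`, in `L^p` for
every smaller `p`; along it `U_𝒫` and `-S_𝒫` are lower semicontinuous. So if `T k` tends to `T`, a
limit of the canonical distributions of temperature `T k` minimizes the free energy of temperature
`T`. By strict convexity of `-S_𝒫` this minimizer is unique in the interior, where it therefore is
the limit of the whole sequence. The minimal free energy is continuous in `T`, and its two parts are
lower semicontinuous, so each of them converges. As `T → ∞`, comparison with the constant `1` gives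
`-T S_𝒫(u_T) ≤ U_𝒫(1)`, so `S_𝒫(u_T)` tends to `0`, the entropy of `1` alone.
-/

/-! ### Convex and log-convex functions with values in `[0, ∞]` -/

lemma ennreal_geom_mean_le_arith_mean2_weighted {a b : ℝ≥0∞} {t : ℝ} (h0 : 0 ≤ t) (h1 : t ≤ 1) :
    a ^ (1 - t) * b ^ t ≤ ENNReal.ofReal (1 - t) * a + ENNReal.ofReal t * b := by
  rcases h0.eq_or_lt with rfl | ht0
  · simp
  rcases h1.eq_or_lt with rfl | ht1
  · simp
  have hconj : (1 - t)⁻¹.HolderConjugate t⁻¹ :=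
    Real.holderConjugate_iff.2 ⟨(one_lt_inv₀ (by linarith)).2 (by linarith), by simp⟩
  simpa [← ENNReal.rpow_mul, (sub_pos.2 ht1).ne', ht0.ne', ENNReal.ofReal_inv_of_pos, sub_pos.2 ht1,
    ht0, div_eq_mul_inv, mul_comm] using
    ENNReal.young_inequality (a ^ (1 - t)) (b ^ t) hconj

lemma ennreal_rpow_mul_rpow_add_le {a₁ a₂ b₁ b₂ : ℝ≥0∞} {t : ℝ} (h0 : 0 ≤ t) (h1 : t ≤ 1) :
    a₁ ^ (1 - t) * a₂ ^ t + b₁ ^ (1 - t) * b₂ ^ t ≤ (a₁ + b₁) ^ (1 - t) * (a₂ + b₂) ^ t := by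
  rcases h0.eq_or_lt with rfl | ht0
  · simp
  rcases h1.eq_or_lt with rfl | ht1
  · simp
  have hconj : (1 - t)⁻¹.HolderConjugate t⁻¹ :=
    Real.holderConjugate_iff.2 ⟨(one_lt_inv₀ (by linarith)).2 (by linarith), by simp⟩
  simpa [Fin.sum_univ_two, ← ENNReal.rpow_mul, (sub_pos.2 ht1).ne', ht0.ne'] using
    ENNReal.inner_le_Lp_mul_Lq Finset.univ
      (fun i : Fin 2 => ![a₁, b₁] i ^ (1 - t)) (fun i => ![a₂, b₂] i ^ t) hconj

lemma tendsto_rpow_mul_rpow {ι : Type*} {l : Filter ι} {f g : ι → ℝ≥0∞} {a b : ℝ≥0∞} {s t : ℝ}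
    (hs : 0 ≤ s) (ht : 0 ≤ t) (hf : Tendsto f l (𝓝 a)) (hg : Tendsto g l (𝓝 b))
    (ha : a ≠ 0 ∨ b ≠ ⊤) (hb : b ≠ 0 ∨ a ≠ ⊤) :
    Tendsto (fun i => f i ^ s * g i ^ t) l (𝓝 (a ^ s * b ^ t)) := by
  have hpow {c d : ℝ≥0∞} {r q : ℝ} (hr : 0 ≤ r) (hq : 0 ≤ q) (h : c ≠ 0 ∨ d ≠ ⊤) :
      c ^ r ≠ 0 ∨ d ^ q ≠ ⊤ :=
    h.imp (fun h => by simp [ENNReal.rpow_eq_zero_iff, h, hr.not_gt])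
      (ENNReal.rpow_ne_top_of_nonneg hq)
  exact ENNReal.Tendsto.mul (hf.ennrpow_const s) (hpow hs ht ha) (hg.ennrpow_const t)
    (hpow ht hs hb)

section LowerSemicontinuousOn

variable {X : Type*} [TopologicalSpace X] [MeasurableSpace X] [OpensMeasurableSpace X] {K : Set X}
  {u : X → ℝ≥0∞}

lemma measurable_indicator_of_lowerSemicontinuousOn (hK : MeasurableSet K)
    (hu : LowerSemicontinuousOn u K) : Measurable (K.indicator u) := by
  refine measurable_of_Ioi fun a => ?_
  obtain ⟨V, hV, hVeq⟩ := lowerSemicontinuousOn_iff_preimage_Ioi.1 hu a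
  have : K.indicator u ⁻¹' Set.Ioi a = K ∩ V := by
    rw [← hVeq]
    ext x
    by_cases hx : x ∈ K <;> simp [hx]
  exact this ▸ hK.inter hV.measurableSet

lemma aemeasurable_of_lowerSemicontinuousOn {ν : Measure X} (hK : MeasurableSet K)
    (hu : LowerSemicontinuousOn u K) : AEMeasurable u (ν.restrict K) :=
  (aemeasurable_indicator_iff hK).1
    (measurable_indicator_of_lowerSemicontinuousOn hK hu).aemeasurable

end LowerSemicontinuousOn

section Convexity

variable {n : ℕ} {K O : Set (Euc n)} {u g : Euc n → ℝ≥0∞} {x : Euc n}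

lemma ConvexFnOn.mono (hu : ConvexFnOn K u) (h : O ⊆ K) : ConvexFnOn O u :=
  fun _ hx _ hy => hu (h hx) (h hy)

lemma LogConvexOn.mono (hu : LogConvexOn K u) (h : O ⊆ K) : LogConvexOn O u :=
  fun _ hx _ hy => hu (h hx) (h hy)

lemma LogConvexOn.convexFnOn (hu : LogConvexOn K u) : ConvexFnOn K u :=
  fun _ hx _ hy _ h0 h1 => (hu hx hy h0 h1).trans (ennreal_geom_mean_le_arith_mean2_weighted h0 h1)

lemma ConvexFnOn.of_tendsto {ι : Type*} {l : Filter ι} [l.NeBot] {u : ι → Euc n → ℝ≥0∞}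
    (hK : Convex ℝ K) (hu : ∀ i, ConvexFnOn K (u i))
    (hg : ∀ x ∈ K, Tendsto (u · x) l (𝓝 (g x))) : ConvexFnOn K g := by
  intro x hx y hy t h0 h1
  refine le_of_tendsto_of_tendsto' (hg _ (hK hx hy (by linarith) h0 (by ring))) ?_
    fun i => hu i hx hy h0 h1
  exact (ENNReal.Tendsto.const_mul (hg x hx) (.inr ENNReal.ofReal_ne_top)).add
    (ENNReal.Tendsto.const_mul (hg y hy) (.inr ENNReal.ofReal_ne_top))

lemma LogConvexOn.of_tendsto {ι : Type*} {l : Filter ι} [l.NeBot] {u : ι → Euc n → ℝ≥0∞}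
    (hK : Convex ℝ K) (hu : ∀ i, LogConvexOn K (u i))
    (hg : ∀ x ∈ K, Tendsto (u · x) l (𝓝 (g x))) (htop : ∀ x ∈ K, g x ≠ ⊤) : LogConvexOn K g := by
  intro x hx y hy t h0 h1
  refine le_of_tendsto_of_tendsto' (hg _ (hK hx hy (by linarith) h0 (by ring))) ?_
    fun i => hu i hx hy h0 h1
  exact tendsto_rpow_mul_rpow (sub_nonneg.2 h1) h0 (hg x hx) (hg y hy) (.inr (htop y hy))
    (.inr (htop x hx))

lemma ConvexFnOn.continuousOn (hu : ConvexFnOn O u) (hO : IsOpen O) (hOc : Convex ℝ O)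
    (htop : ∀ x ∈ O, u x ≠ ⊤) : ContinuousOn u O := by
  have hreal : ConvexOn ℝ O fun x => (u x).toReal := by
    refine ⟨hOc, fun x hx y hy a b ha hb hab => ?_⟩
    obtain rfl : a = 1 - b := by linarith
    have hxt := ENNReal.mul_ne_top (ENNReal.ofReal_ne_top (r := 1 - b)) (htop x hx)
    have hyt := ENNReal.mul_ne_top (ENNReal.ofReal_ne_top (r := b)) (htop y hy)
    simpa [ENNReal.toReal_add hxt hyt, ha, hb] using
      ENNReal.toReal_mono (ENNReal.add_ne_top.2 ⟨hxt, hyt⟩) (hu hx hy hb (by linarith))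
  exact (ENNReal.continuous_ofReal.comp_continuousOn (hreal.continuousOn hO)).congr
    fun x hx => (ENNReal.ofReal_toReal (htop x hx)).symm

lemma ConvexFnOn.measure_ball_mul_le_setLIntegral {r : ℝ} {ν : Measure (Euc n)}
    [ν.IsAddLeftInvariant] [ν.IsNegInvariant] (hu : ConvexFnOn (Metric.ball x r) u)
    (hm : AEMeasurable u (ν.restrict (Metric.ball x r))) :
    ν (Metric.ball x r) * u x ≤ ∫⁻ y in Metric.ball x r, u y ∂ν := by
  have hball : (fun y => x + x - y) ⁻¹' Metric.ball x r = Metric.ball x r := by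
    ext y
    simp only [Set.mem_preimage, mem_ball_iff_norm]
    rw [show x + x - y - x = -(y - x) by abel, norm_neg]
  have hpres := Measure.measurePreserving_sub_left ν (x + x)
  have hemb := (MeasurableEquiv.subLeft (x + x)).measurableEmbedding
  have hrefl : ∫⁻ y in Metric.ball x r, u (x + x - y) ∂ν = ∫⁻ y in Metric.ball x r, u y ∂ν := by
    have := hpres.setLIntegral_comp_preimage_emb hemb u (Metric.ball x r)
    rwa [hball] at this
  have hmid : ∀ y ∈ Metric.ball x r, u x ≤ 2⁻¹ * u y + 2⁻¹ * u (x + x - y) := by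
    intro y hy
    have h := hu hy (show x + x - y ∈ Metric.ball x r from hball.ge hy) (t := 1 / 2)
      (by norm_num) (by norm_num)
    rw [show (1 - 1 / 2 : ℝ) • y + (1 / 2 : ℝ) • (x + x - y) = x by module] at h
    norm_num [ENNReal.ofReal_div_of_pos] at h
    exact h
  calc ν (Metric.ball x r) * u x = ∫⁻ _ in Metric.ball x r, u x ∂ν := by
        rw [setLIntegral_const, mul_comm]
    _ ≤ ∫⁻ y in Metric.ball x r, (2⁻¹ * u y + 2⁻¹ * u (x + x - y)) ∂ν :=
        setLIntegral_mono' measurableSet_ball hmid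
    _ = ∫⁻ y in Metric.ball x r, u y ∂ν := by
        rw [lintegral_add_left' (hm.const_mul _), lintegral_const_mul' _ _ (by simp),
          lintegral_const_mul' _ _ (by simp), hrefl, ← add_mul, ENNReal.inv_two_add_inv_two,
          one_mul]

theorem ConvexFnOn.exists_subseq_tendsto (hO : IsOpen O) (hOc : Convex ℝ O)
    {u : ℕ → Euc n → ℝ≥0∞} (hu : ∀ k, ConvexFnOn O (u k))
    (hb : ∀ x ∈ O, ∃ B ≠ ⊤, ∀ k, u k x ≤ B) :
    ∃ φ : ℕ → ℕ, StrictMono φ ∧ ∃ g : Euc n → ℝ≥0∞, (∀ x ∈ O, g x ≠ ⊤) ∧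
      ∀ x ∈ O, Tendsto (fun k => u (φ k) x) atTop (𝓝 (g x)) := by
  let d := TopologicalSpace.denseSeq (Euc n)
  obtain ⟨a, φ, hφ, ha⟩ := CompactSpace.tendsto_subseq fun k i => u k (d i)
  rw [tendsto_pi_nhds] at ha
  let G (U : Ultrafilter ℕ) : Euc n → ℝ≥0∞ := (U.map fun k => u (φ k)).lim
  have hG (U : Ultrafilter ℕ) (x : Euc n) : Tendsto (fun k => u (φ k) x) U (𝓝 (G U x)) :=
    tendsto_pi_nhds.1 (Ultrafilter.le_nhds_lim (U.map fun k => u (φ k))) x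
  have hGtop (U : Ultrafilter ℕ) (x) (hx : x ∈ O) : G U x ≠ ⊤ := by
    obtain ⟨B, hB, hle⟩ := hb x hx
    exact ne_top_of_le_ne_top hB (le_of_tendsto' (hG U x) fun k => hle _)
  have hGcont (U : Ultrafilter ℕ) : ContinuousOn (G U) O :=
    (ConvexFnOn.of_tendsto hOc (fun k => hu (φ k)) fun x _ => hG U x).continuousOn hO hOc (hGtop U)
  have hGeq (U V : Ultrafilter ℕ) (hU : (U : Filter ℕ) ≤ atTop)
      (hV : (V : Filter ℕ) ≤ atTop) : Set.EqOn (G U) (G V) O := by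
    have hdense : Set.EqOn (G U) (G V) (O ∩ Set.range d) := by
      rintro _ ⟨-, i, rfl⟩
      exact (tendsto_nhds_unique (hG U _) ((ha i).mono_left hU)).trans
        (tendsto_nhds_unique (hG V _) ((ha i).mono_left hV)).symm
    exact hdense.of_subset_closure (hGcont U) (hGcont V) Set.inter_subset_left
      ((TopologicalSpace.denseRange_denseSeq _).open_subset_closure_inter hO)
  refine ⟨φ, hφ, G (Ultrafilter.of atTop), hGtop _, fun x hx => ?_⟩
  refine tendsto_iff_ultrafilter _ _ _ |>.2 fun U hU => ?_
  rw [hGeq _ U (Ultrafilter.of_le _) hU hx]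
  exact hG U x

end Convexity

/-! ### Lower semicontinuous extension to the closure -/

/-- The lower limits of `g` along `O`. For `g` continuous on `O` this is its lower semicontinuous
extension to `closure O`; it turns limits of log-convex functions on the interior of a polytope `P`
into lower semicontinuous functions on `P`. -/
def lscExtension {n : ℕ} (O : Set (Euc n)) (g : Euc n → ℝ≥0∞) (x : Euc n) : ℝ≥0∞ :=
  liminf g (𝓝[O] x)

section Extension

variable {n : ℕ} {O : Set (Euc n)} {g : Euc n → ℝ≥0∞} {x y x₀ : Euc n}

lemma lowerSemicontinuous_lscExtension : LowerSemicontinuous (lscExtension O g) := by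
  intro x a ha
  obtain ⟨b, hab, hb⟩ := exists_between ha
  filter_upwards [eventually_nhds_nhdsWithin.2 (eventually_lt_of_lt_liminf hb)] with z hz
  exact hab.trans_le (le_liminf_of_le (by isBoundedDefault) (hz.mono fun _ h => h.le))

lemma lscExtension_eq_of_continuousOn (hg : ContinuousOn g O) (hx : x ∈ O) :
    lscExtension O g x = g x :=
  have := mem_closure_iff_nhdsWithin_neBot.1 (subset_closure hx)
  (hg x hx).liminf_eq

lemma le_lscExtension {c : ℝ≥0∞} (hc : ∀ z ∈ O, c ≤ g z) : c ≤ lscExtension O g x :=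
  le_liminf_of_le (by isBoundedDefault) (eventually_mem_nhdsWithin.mono hc)

lemma lscExtension_le_liminf_comp {ι : Type*} {l : Filter ι} {f : ι → Euc n}
    (hf : Tendsto f l (𝓝[O] x)) : lscExtension O g x ≤ liminf (g ∘ f) l :=
  liminf_le_liminf_of_le hf

lemma exists_ultrafilter_tendsto_lscExtension (hx : x ∈ closure O) :
    ∃ U : Ultrafilter (Euc n), ↑U ≤ 𝓝[O] x ∧ Tendsto g U (𝓝 (lscExtension O g x)) :=
  have := mem_closure_iff_nhdsWithin_neBot.1 hx
  mapClusterPt_iff_ultrafilter.1 MapClusterPt.liminf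

lemma LogConvexOn.lscExtension_closure (hg : LogConvexOn O g) (hO : Convex ℝ O)
    (h0 : ∀ x ∈ closure O, lscExtension O g x ≠ 0) :
    LogConvexOn (closure O) (lscExtension O g) := by
  intro x hx y hy t ht0 ht1
  obtain ⟨U, hU, hgU⟩ := exists_ultrafilter_tendsto_lscExtension (g := g) hx
  obtain ⟨V, hV, hgV⟩ := exists_ultrafilter_tendsto_lscExtension (g := g) hy
  have hUO : ∀ᶠ p in (U : Filter _) ×ˢ (V : Filter _), p.1 ∈ O ∧ p.2 ∈ O :=
    prod_mem_prod (hU self_mem_nhdsWithin) (hV self_mem_nhdsWithin)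
  have hmem : ∀ᶠ p in (U : Filter _) ×ˢ (V : Filter _), (1 - t) • p.1 + t • p.2 ∈ O :=
    hUO.mono fun p hp => hO hp.1 hp.2 (by linarith) ht0 (by ring)
  have hcombo : Tendsto (fun p : Euc n × Euc n => (1 - t) • p.1 + t • p.2)
      ((U : Filter _) ×ˢ (V : Filter _)) (𝓝[O] ((1 - t) • x + t • y)) := by
    refine tendsto_nhdsWithin_iff.2 ⟨?_, hmem⟩
    exact ((tendsto_fst.mono_right (hU.trans nhdsWithin_le_nhds)).const_smul _).add
      ((tendsto_snd.mono_right (hV.trans nhdsWithin_le_nhds)).const_smul _)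
  calc lscExtension O g ((1 - t) • x + t • y)
      ≤ liminf (fun p : Euc n × Euc n => g p.1 ^ (1 - t) * g p.2 ^ t)
          ((U : Filter _) ×ˢ (V : Filter _)) :=
        (lscExtension_le_liminf_comp hcombo).trans
          (liminf_le_liminf (hUO.mono fun p hp => hg hp.1 hp.2 ht0 ht1))
    _ = _ := (tendsto_rpow_mul_rpow (sub_nonneg.2 ht1) ht0 (hgU.comp tendsto_fst)
        (hgV.comp tendsto_snd) (.inl (h0 x hx)) (.inl (h0 y hy))).liminf_eq

/- Every point `x₀` is a fixed proportion of the way from any `x ∈ O` to some point of a ball around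
`x₀`, on which `g` is bounded above. -/
lemma LogConvexOn.exists_pos_le (hg : LogConvexOn O g) (hO : IsOpen O) (hOc : Convex ℝ O)
    (hOb : Bornology.IsBounded O) (htop : ∀ x ∈ O, g x ≠ ⊤) (hx₀ : x₀ ∈ O) (h0 : g x₀ ≠ 0) :
    ∃ c ≠ 0, ∀ x ∈ O, c ≤ g x := by
  obtain ⟨r, hr, hball⟩ := Metric.nhds_basis_closedBall.mem_iff.1 (hO.mem_nhds hx₀)
  obtain ⟨R, hR, hsub⟩ := hOb.subset_closedBall_lt 0 x₀
  obtain ⟨z, hz, hmax⟩ := (isCompact_closedBall x₀ r).exists_isMaxOn ⟨x₀, by simpa using hr.le⟩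
    ((hg.convexFnOn.continuousOn hO hOc htop).mono hball)
  set s := r / R
  have hs : 0 < s := by positivity
  set t := (1 + s)⁻¹
  have ht1 : t < 1 := inv_lt_one_of_one_lt₀ (by linarith)
  refine ⟨(g x₀ / g z ^ t) ^ (1 - t)⁻¹, ?_, fun x hx => ?_⟩
  · have := ENNReal.rpow_ne_top_of_nonneg (by positivity : 0 ≤ t) (htop z (hball hz))
    simp [ENNReal.rpow_eq_zero_iff, h0, this, ht1.le]
  have hx' : x₀ + s • (x₀ - x) ∈ Metric.closedBall x₀ r := by
    rw [mem_closedBall_iff_norm, add_sub_cancel_left, norm_smul, Real.norm_of_nonneg hs.le,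
      ← dist_eq_norm, dist_comm]
    exact (mul_le_mul_of_nonneg_left (hsub hx) hs.le).trans_eq (div_mul_cancel₀ r hR.ne')
  have hcombo : (1 - t) • x + t • (x₀ + s • (x₀ - x)) = x₀ := by
    have : t * s = 1 - t := by simp only [t]; field_simp; ring
    rw [smul_add, smul_smul, this]
    module
  rw [ENNReal.rpow_inv_le_iff (sub_pos.2 ht1)]
  refine ENNReal.div_le_of_le_mul ?_
  calc g x₀ = g ((1 - t) • x + t • (x₀ + s • (x₀ - x))) := by rw [hcombo]
    _ ≤ g x ^ (1 - t) * g (x₀ + s • (x₀ - x)) ^ t := hg hx (hball hx') (by positivity) ht1.le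
    _ ≤ g x ^ (1 - t) * g z ^ t := by gcongr; exact hmax hx'

lemma lscExtension_le_liminf_of_tendsto {ι : Type*} {l : Filter ι} [l.NeBot]
    {u : ι → Euc n → ℝ≥0∞} (hO : IsOpen O) (hOc : Convex ℝ O)
    (hu : ∀ i, ConvexFnOn (closure O) (u i)) (hg : ∀ x ∈ O, Tendsto (u · x) l (𝓝 (g x)))
    (hx₀ : x₀ ∈ O) (htop : g x₀ ≠ ⊤) (hy : y ∈ closure O) :
    lscExtension O g y ≤ liminf (u · y) l := by
  set a := liminf (u · y) l
  obtain ⟨U, hU, hUa⟩ := mapClusterPt_iff_ultrafilter.1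
    (MapClusterPt.liminf (u := (u · y)) (f := l))
  have hray : ∀ τ ∈ Set.Ioo (0 : ℝ) 1, (1 - τ) • y + τ • x₀ ∈ O := fun τ hτ => by
    have := hOc.combo_closure_interior_mem_interior hy (hO.interior_eq.symm ▸ hx₀)
      (sub_nonneg.2 hτ.2.le) hτ.1 (by ring)
    rwa [hO.interior_eq] at this
  have hle : ∀ τ ∈ Set.Ioo (0 : ℝ) 1,
      g ((1 - τ) • y + τ • x₀) ≤ a + ENNReal.ofReal τ * g x₀ := fun τ hτ =>
    le_of_tendsto_of_tendsto' ((hg _ (hray τ hτ)).mono_left hU)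
      (hUa.add (ENNReal.Tendsto.const_mul ((hg _ hx₀).mono_left hU) (.inr ENNReal.ofReal_ne_top)))
      fun i => (hu i hy (subset_closure hx₀) hτ.1.le hτ.2.le).trans <| by
        gcongr
        exact mul_le_of_le_one_left' (ENNReal.ofReal_le_one.2 (by linarith [hτ.1]))
  have hIoo : ∀ᶠ τ : ℝ in 𝓝[>] 0, τ ∈ Set.Ioo (0 : ℝ) 1 := Ioo_mem_nhdsGT one_pos
  have hto : Tendsto (fun τ : ℝ => (1 - τ) • y + τ • x₀) (𝓝[>] 0) (𝓝[O] y) := by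
    refine tendsto_nhdsWithin_iff.2 ⟨?_, hIoo.mono hray⟩
    exact tendsto_nhdsWithin_of_tendsto_nhds (Continuous.tendsto' (by fun_prop) _ _ (by simp))
  have hlim : Tendsto (fun τ : ℝ => a + ENNReal.ofReal τ * g x₀)
      (𝓝[>] 0) (𝓝 a) := by
    have := ENNReal.Tendsto.mul_const (b := g x₀)
      (ENNReal.continuous_ofReal.tendsto 0 |>.mono_left (nhdsWithin_le_nhds (s := Set.Ioi 0)))
      (.inr htop)
    simpa using tendsto_const_nhds.add this
  exact (lscExtension_le_liminf_comp hto).trans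
    ((liminf_le_liminf (hIoo.mono hle)).trans_eq hlim.liminf_eq)

end Extension

/-! ### Facets of a polytope -/

section AffineFunctions

variable {E : Type*} [NormedAddCommGroup E] [NormedSpace ℝ E]
  {ℓ : E →ᵃ[ℝ] ℝ} {s : Set E} {w z : E}

lemma affineMap_linear_ne_zero (hℓ : ℓ ≠ 0) (hw : ℓ w = 0) : ℓ.linear ≠ 0 := fun h => hℓ <| by
  ext x
  have := ℓ.linearMap_vsub x w
  simp_all

lemma affineMap_pos_of_mem_interior [FiniteDimensional ℝ E] (hℓ : ℓ ≠ 0) (hs : ∀ y ∈ s, 0 ≤ ℓ y)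
    (hz : z ∈ interior s) : 0 < ℓ z := by
  refine (hs z (interior_subset hz)).lt_of_ne' fun h0 => ?_
  have hopen : IsOpenMap ℓ := AffineMap.isOpenMap_linear_iff.1 <|
    LinearMap.isOpenMap_of_finiteDimensional _
      (LinearMap.surjective (affineMap_linear_ne_zero hℓ h0))
  have hsub : ℓ '' interior s ⊆ Set.Ici 0 :=
    Set.image_subset_iff.2 fun y hy => hs y (interior_subset hy)
  have := interior_maximal hsub (hopen _ isOpen_interior) (Set.mem_image_of_mem ℓ hz)
  simp [h0] at this

lemma vectorSpan_eq_ker_linear_of_eventually (hw : ℓ w = 0)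
    (hev : ∀ᶠ x in 𝓝 w, ℓ x = 0 → x ∈ s) :
    vectorSpan ℝ {x ∈ s | ℓ x = 0} = LinearMap.ker ℓ.linear := by
  refine le_antisymm (Submodule.span_le.2 ?_) fun v hv => ?_
  · rintro _ ⟨a, ha, b, hb, rfl⟩
    simpa [ha.2, hb.2] using ℓ.linearMap_vsub a b
  · have hzero (r : ℝ) : ℓ (r • v + w) = 0 := by
      simpa [hw, LinearMap.mem_ker.1 hv] using ℓ.map_vadd w (r • v)
    have hto : Tendsto (fun r : ℝ => r • v + w) (𝓝[>] 0) (𝓝 w) :=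
      (Continuous.tendsto' (by fun_prop) 0 w (by simp)).mono_left nhdsWithin_le_nhds
    obtain ⟨r, hrs, hr⟩ := ((hto.eventually hev).and self_mem_nhdsWithin).exists
    have hmem := vsub_mem_vectorSpan ℝ (s := {x ∈ s | ℓ x = 0})
      ⟨hrs (hzero r), hzero r⟩ ⟨hev.self_of_nhds hw, hw⟩
    rw [vsub_eq_sub, add_sub_cancel_right] at hmem
    exact (Submodule.smul_mem_iff _ (ne_of_gt hr)).1 hmem

end AffineFunctions

section Facets

variable {n : ℕ} {P F : Set (Euc n)}

lemma IsPolytope.isClosed (hP : IsPolytope P) : IsClosed P := hP.1.isClosed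

lemma IsPolytope.convex (hP : IsPolytope P) : Convex ℝ P := by
  obtain ⟨-, -, m, L, -, rfl⟩ := hP
  exact convex_iInter fun k => (convex_Ici (0 : ℝ)).affine_preimage (L k)

lemma IsFaceOf.subset_frontier (hF : IsFaceOf P F) : F ⊆ frontier P := by
  obtain ⟨ℓ, hℓ, hnonneg, rfl⟩ := hF
  exact fun x hx => ⟨subset_closure hx.1,
    fun hi => (affineMap_pos_of_mem_interior hℓ hnonneg hi).ne' hx.2⟩

lemma IsFaceOf.isCompact (hF : IsFaceOf P F) (hP : IsCompact P) : IsCompact F := by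
  obtain ⟨ℓ, -, -, rfl⟩ := hF
  exact hP.inter_right (isClosed_eq ℓ.continuous_of_finiteDimensional continuous_const)

lemma isFacetOf_of_eventually {ℓ : Euc n →ᵃ[ℝ] ℝ} {w : Euc n} (hℓ : ℓ ≠ 0)
    (hnonneg : ∀ x ∈ P, 0 ≤ ℓ x) (hw : ℓ w = 0) (hev : ∀ᶠ x in 𝓝 w, ℓ x = 0 → x ∈ P) :
    IsFacetOf P {x ∈ P | ℓ x = 0} := by
  refine ⟨⟨ℓ, hℓ, hnonneg, rfl⟩, ?_⟩
  rw [vectorSpan_eq_ker_linear_of_eventually hw hev,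
    Module.Dual.finrank_ker_add_one_of_ne_zero (affineMap_linear_ne_zero hℓ hw)]
  simp

lemma isFacetOf_of_irredundant {ι : Type*} {I : Finset ι} {L : ι → Euc n →ᵃ[ℝ] ℝ} {k : ι}
    {y : Euc n} (hne : (interior P).Nonempty) (hL : ∀ j, L j ≠ 0)
    (hP : P = {x | ∀ j ∈ I, 0 ≤ L j x}) (hk : k ∈ I) (hy : ∀ j ∈ I, j ≠ k → 0 ≤ L j y)
    (hyk : L k y < 0) : IsFacetOf P {x ∈ P | L k x = 0} := by
  have hnonneg : ∀ j ∈ I, ∀ x ∈ P, 0 ≤ L j x := fun j hj x hx => (hP.le hx) j hj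
  obtain ⟨z, hz⟩ := hne
  have hzpos : ∀ j ∈ I, 0 < L j z := fun j hj =>
    affineMap_pos_of_mem_interior (hL j) (hnonneg j hj) hz
  obtain ⟨a, b, ha, hb, hab, hzero⟩ : ∃ a b : ℝ, 0 < a ∧ 0 < b ∧ a + b = 1 ∧
      a * L k z + b * L k y = 0 := by
    have hden : 0 < L k z - L k y := by linarith [hzpos k hk]
    refine ⟨-L k y / (L k z - L k y), L k z / (L k z - L k y), div_pos (by linarith) hden,
      div_pos (hzpos k hk) hden, ?_, ?_⟩ <;> field_simp <;> ring
  have hcombo (j : ι) : L j (a • z + b • y) = a * L j z + b * L j y :=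
    Convex.combo_affine_apply hab
  have hpos : ∀ j ∈ I, j ≠ k → 0 < L j (a • z + b • y) := fun j hj hjk => by
    rw [hcombo]
    exact add_pos_of_pos_of_nonneg (mul_pos ha (hzpos j hj)) (mul_nonneg hb.le (hy j hj hjk))
  have hnear : ∀ᶠ x in 𝓝 (a • z + b • y), ∀ j ∈ I, j ≠ k → 0 < L j x :=
    (eventually_all_finset I).2 fun j hj => eventually_imp_distrib_left.2 fun hjk =>
      (L j).continuous_of_finiteDimensional.continuousAt.eventually_const_lt (hpos j hj hjk)
  refine isFacetOf_of_eventually (hL k) (hnonneg k hk) ((hcombo k).trans hzero) ?_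
  filter_upwards [hnear] with x hx hxk
  refine hP.ge fun j hj => ?_
  rcases eq_or_ne j k with rfl | hjk
  · exact hxk.ge
  · exact (hx j hj hjk).le

lemma frontier_subset_iUnion_zeroLocus {ι : Type*} {I : Finset ι} {L : ι → Euc n →ᵃ[ℝ] ℝ}
    (hP : P = {x | ∀ j ∈ I, 0 ≤ L j x}) : frontier P ⊆ {x | ∃ j ∈ I, L j x = 0} := by
  intro x hx
  by_contra hcon
  have hcont (j : ι) : Continuous (L j) := (L j).continuous_of_finiteDimensional
  have hclosed : IsClosed P := by
    rw [hP]
    simp only [Set.ofPred_forall]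
    exact isClosed_biInter fun j _ => isClosed_le continuous_const (hcont j)
  have hpos : ∀ᶠ y in 𝓝 x, ∀ j ∈ I, 0 < L j y :=
    (eventually_all_finset I).2 fun j hj => (hcont j).continuousAt.eventually_const_lt <|
      (hP.le (hclosed.frontier_subset hx) j hj).lt_of_ne' fun h => hcon ⟨j, hj, h⟩
  exact hx.2 <| mem_interior_iff_mem_nhds.2 <|
    hpos.mono fun y hy => hP.ge fun j hj => (hy j hj).le

theorem IsPolytope.exists_finset_facets (h : IsPolytope P) :
    ∃ 𝓕 : Finset (Set (Euc n)), (∀ F ∈ 𝓕, IsFacetOf P F) ∧ frontier P ⊆ ⋃ F ∈ 𝓕, F := by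
  classical
  obtain ⟨hcomp, hne, m, L, hL, hPL⟩ := h
  obtain ⟨I, -, hI⟩ := exists_minimal_le_of_wellFoundedLT
    (fun I : Finset (Fin m) => P = {x | ∀ k ∈ I, 0 ≤ L k x}) Finset.univ (by ext; simp [hPL])
  have hPI : P = {x | ∀ k ∈ I, 0 ≤ L k x} := hI.prop
  refine ⟨I.image fun k => {x ∈ P | L k x = 0}, ?_, fun x hx => ?_⟩
  · refine Finset.forall_mem_image.2 fun k hk => ?_
    obtain ⟨y, hy, hyP⟩ : ∃ y, (∀ j ∈ I.erase k, 0 ≤ L j y) ∧ y ∉ P := by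
      by_contra! hcon
      refine hI.not_prop_of_lt (Finset.erase_ssubset hk) (Set.Subset.antisymm ?_ hcon)
      exact fun x hx j hj => hPI.le hx j (Finset.mem_of_mem_erase hj)
    have hy' : ∀ j ∈ I, j ≠ k → 0 ≤ L j y := fun j hj hjk => hy j (Finset.mem_erase.2 ⟨hjk, hj⟩)
    refine isFacetOf_of_irredundant hne hL hPI hk hy' ?_
    refine not_le.1 fun hky => hyP (hPI.ge fun j hj => ?_)
    rcases eq_or_ne j k with rfl | hjk
    exacts [hky, hy' j hj hjk]
  · obtain ⟨j, hj, hjx⟩ := frontier_subset_iUnion_zeroLocus hPI hx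
    exact Set.mem_biUnion (Finset.mem_image_of_mem _ hj)
      ⟨hcomp.isClosed.frontier_subset hx, hjx⟩

end Facets

/-! ### Polar coordinates centred at an interior point -/

section Cone

variable {E : Type*}

/-- The cone with apex `z` over the set `F`. -/
def coneOver [AddCommGroup E] [Module ℝ E] (z : E) (F : Set E) : Set E :=
  (fun p : E × ℝ => (1 - p.2) • p.1 + p.2 • z) '' (F ×ˢ Set.Icc 0 1)

lemma smul_add_smul_mem_coneOver_iff [AddCommGroup E] [Module ℝ E] {F : Set E} {ℓ : E →ᵃ[ℝ] ℝ}
    {y z : E} {τ : ℝ} (hF : ∀ x ∈ F, ℓ x = 0) (hz : ℓ z ≠ 0) (hy : ℓ y = 0) (hτ : τ ≠ 1) :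
    (1 - τ) • y + τ • z ∈ coneOver z F ↔ y ∈ F ∧ τ ∈ Set.Icc 0 1 := by
  refine ⟨?_, fun h => ⟨(y, τ), h, rfl⟩⟩
  rintro ⟨⟨x, s⟩, ⟨hx, hs⟩, hxs⟩
  dsimp only at hx hs hxs
  obtain rfl : s = τ := by
    simpa [Convex.combo_affine_apply, hF x hx, hy, hz] using congrArg ℓ hxs
  have hxy : x = y := smul_right_injective E (sub_ne_zero.2 hτ.symm) (add_right_cancel hxs)
  exact ⟨hxy ▸ hx, hs⟩

lemma isCompact_coneOver [NormedAddCommGroup E] [NormedSpace ℝ E] {z : E} {F : Set E}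
    (hF : IsCompact F) : IsCompact (coneOver z F) :=
  (hF.prod isCompact_Icc).image (by fun_prop)

end Cone

section Haar

open Measure

variable {E : Type*} [NormedAddCommGroup E] [NormedSpace ℝ E] [MeasurableSpace E] [BorelSpace E]

lemma map_const_add_hausdorffMeasure_ker (ℓ : E →ᵃ[ℝ] ℝ) {y : E} (hy : ℓ y = 0) {d : ℝ}
    (hd : 0 ≤ d) :
    map (fun k : LinearMap.ker ℓ.linear => y + k) μH[d] = μH[d].restrict {x | ℓ x = 0} := by
  have hiso : Isometry fun k : LinearMap.ker ℓ.linear => y + (k : E) :=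
    (isometry_add_left y).comp isometry_subtype_coe
  rw [hiso.map_hausdorffMeasure (Or.inl hd)]
  congr 1
  ext x
  refine ⟨?_, fun hx => ⟨⟨x - y, ?_⟩, by simp⟩⟩
  · rintro ⟨k, rfl⟩
    simpa [hy, add_comm] using ℓ.map_vadd y (k : E)
  · simpa [hy, hx.out] using ℓ.linearMap_vsub x y

variable [FiniteDimensional ℝ E]

lemma lintegral_eq_mul_lintegral_comp_smul (κ : Measure E) [κ.IsAddHaarMeasure] {f : E → ℝ≥0∞}
    (hf : Measurable f) {r : ℝ} (hr : r ≠ 0) :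
    ∫⁻ x, f x ∂κ = ENNReal.ofReal |r ^ Module.finrank ℝ E| * ∫⁻ x, f (r • x) ∂κ := by
  have hr' : |r ^ Module.finrank ℝ E| ≠ 0 := abs_ne_zero.2 (pow_ne_zero _ hr)
  rw [← lintegral_map hf (measurable_const_smul r), map_addHaar_smul κ hr, lintegral_smul_measure,
    smul_eq_mul, ← mul_assoc, ← ENNReal.ofReal_mul (abs_nonneg _), abs_inv, mul_inv_cancel₀ hr',
    ENNReal.ofReal_one, one_mul]

lemma exists_lintegral_eq_mul_lintegral_ker (ν : Measure E) [ν.IsAddHaarMeasure] (φ : E →ₗ[ℝ] ℝ)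
    (κ : Measure (LinearMap.ker φ)) [κ.IsAddHaarMeasure] {v : E} (hv : φ v ≠ 0) :
    ∃ c : ℝ≥0, ∀ f : E → ℝ≥0∞, Measurable f →
      ∫⁻ x, f x ∂ν = c * ∫⁻ τ : ℝ, ∫⁻ k : LinearMap.ker φ, f (k + τ • v) ∂κ := by
  let e₀ : LinearMap.ker φ × ℝ →ₗ[ℝ] E :=
    (LinearMap.ker φ).subtype.coprod (LinearMap.toSpanSingleton ℝ E v)
  have hbij : Function.Bijective e₀ := by
    refine ⟨(injective_iff_map_eq_zero e₀).2 fun ⟨k, τ⟩ h => ?_, fun x => ?_⟩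
    · have hτ : τ = 0 := by simpa [e₀, hv] using congrArg φ h
      simpa [e₀, hτ] using h
    · refine ⟨⟨⟨x - (φ x / φ v) • v, ?_⟩, φ x / φ v⟩, by simp [e₀]⟩
      simp [hv]
  let e : (LinearMap.ker φ × ℝ) ≃L[ℝ] E := (LinearEquiv.ofBijective e₀ hbij).toContinuousLinearEquiv
  have : (map e (κ.prod volume)).IsAddHaarMeasure := e.isAddHaarMeasure_map _
  refine ⟨ν.addHaarScalarFactor (map e (κ.prod volume)), fun f hf => ?_⟩
  conv_lhs => rw [isAddLeftInvariant_eq_smul ν (map e (κ.prod volume))]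
  rw [lintegral_smul_measure, lintegral_map hf e.continuous.measurable,
    lintegral_prod_symm' (fun p => f (e p)) (hf.comp e.continuous.measurable)]
  rfl

lemma hausdorffMeasure_lt_top_of_isCompact {F : Set E} (hF : IsCompact F) {ℓ : E →ᵃ[ℝ] ℝ}
    (hℓ : ∀ y ∈ F, ℓ y = 0) : μH[Module.finrank ℝ (LinearMap.ker ℓ.linear)] F < ⊤ := by
  rcases F.eq_empty_or_nonempty with rfl | ⟨y, hy⟩
  · simp
  have hiso : Isometry fun k : LinearMap.ker ℓ.linear => y + (k : E) :=
    (isometry_add_left y).comp isometry_subtype_coe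
  have hmap := map_const_add_hausdorffMeasure_ker ℓ (hℓ y hy)
    (d := Module.finrank ℝ (LinearMap.ker ℓ.linear)) (by positivity)
  rw [← Set.inter_eq_left.2 (show F ⊆ {x | ℓ x = 0} from hℓ), ← restrict_apply hF.measurableSet,
    ← hmap, map_apply hiso.continuous.measurable hF.measurableSet]
  exact (hiso.isClosedEmbedding.isCompact_preimage hF).measure_lt_top

variable {F : Set E} {ℓ : E →ᵃ[ℝ] ℝ} {y z : E}

lemma lintegral_slice_coneOver_le (hF : MeasurableSet F) (hcone : MeasurableSet (coneOver z F))
    (hℓ : ∀ x ∈ F, ℓ x = 0) (hz : ℓ z ≠ 0) (hy : ℓ y = 0) {f : E → ℝ≥0∞} (hf : Measurable f)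
    {τ : ℝ} (hτ : τ ≠ 1) :
    ∫⁻ k : LinearMap.ker ℓ.linear, (coneOver z F).indicator f (y + (k + τ • (z - y)))
        ∂μH[Module.finrank ℝ (LinearMap.ker ℓ.linear)] ≤
      (Set.Icc 0 1).indicator (fun τ => ∫⁻ x in F, f ((1 - τ) • x + τ • z)
        ∂μH[Module.finrank ℝ (LinearMap.ker ℓ.linear)]) τ := by
  set K := LinearMap.ker ℓ.linear
  have hker (k : K) : ℓ (y + k) = 0 := by simpa [hy, add_comm] using ℓ.map_vadd y (k : E)
  have hpoint (k : K) : y + (((1 - τ) • k : K) + τ • (z - y)) = (1 - τ) • (y + k) + τ • z := by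
    rw [Submodule.coe_smul]
    module
  have hmem (k : K) :
      (1 - τ) • (y + k) + τ • z ∈ coneOver z F ↔ y + (k : E) ∈ F ∧ τ ∈ Set.Icc 0 1 :=
    smul_add_smul_mem_coneOver_iff hℓ hz (hker k) hτ
  set g := (coneOver z F).indicator f with hg
  have hgm : Measurable g := hf.indicator hcone
  rw [lintegral_eq_mul_lintegral_comp_smul (f := fun k : K => g (y + (k + τ • (z - y)))) _
    (hgm.comp (by fun_prop)) (sub_ne_zero.2 hτ.symm)]
  simp only [hpoint]
  by_cases hτ' : τ ∈ Set.Icc (0 : ℝ) 1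
  · have hpow : |(1 - τ) ^ Module.finrank ℝ K| ≤ 1 := by
      rw [abs_pow, abs_of_nonneg (sub_nonneg.2 hτ'.2)]
      exact pow_le_one₀ (sub_nonneg.2 hτ'.2) (by linarith [hτ'.1])
    have hslice (k : K) : g ((1 - τ) • (y + k) + τ • z) =
        F.indicator (fun x => f ((1 - τ) • x + τ • z)) (y + k) := by
      classical
      simp only [hg, Set.indicator_apply, hmem, hτ', and_true]
    calc
      _ ≤ ∫⁻ k : K, F.indicator (fun x => f ((1 - τ) • x + τ • z)) (y + k) ∂μH[_] := by
        simp only [hslice]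
        exact mul_le_of_le_one_left' (ENNReal.ofReal_le_one.2 hpow)
      _ = ∫⁻ x in {x | ℓ x = 0}, F.indicator (fun x => f ((1 - τ) • x + τ • z)) x ∂μH[_] := by
        have hslice_meas : Measurable (F.indicator fun x => f ((1 - τ) • x + τ • z)) :=
          (hf.comp (by fun_prop)).indicator hF
        rw [← map_const_add_hausdorffMeasure_ker ℓ hy (Nat.cast_nonneg _),
          lintegral_map hslice_meas (by fun_prop)]
      _ ≤ _ := by
        rw [Set.indicator_of_mem hτ', ← lintegral_indicator hF]
        exact setLIntegral_le_lintegral _ _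
  · have hzero (k : K) : g ((1 - τ) • (y + k) + τ • z) = 0 :=
      Set.indicator_of_notMem (fun h => hτ' ((hmem k).1 h).2) f
    simp only [hzero, lintegral_zero, mul_zero, zero_le]

lemma exists_setLIntegral_coneOver_le_of_affineMap (ν : Measure E) [ν.IsAddHaarMeasure]
    (hF : IsCompact F) (hℓ : ∀ x ∈ F, ℓ x = 0) (hz : ℓ z ≠ 0) :
    ∃ c : ℝ≥0, ∀ f : E → ℝ≥0∞, Measurable f → ∫⁻ x in coneOver z F, f x ∂ν ≤
      c * ∫⁻ τ in Set.Icc (0 : ℝ) 1, ∫⁻ y in F, f ((1 - τ) • y + τ • z)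
        ∂μH[Module.finrank ℝ (LinearMap.ker ℓ.linear)] := by
  rcases F.eq_empty_or_nonempty with rfl | ⟨y, hyF⟩
  · exact ⟨0, fun f _ => by simp [coneOver]⟩
  have hy : ℓ y = 0 := hℓ y hyF
  have hv : ℓ.linear (z - y) ≠ 0 := (ℓ.linearMap_vsub z y).trans_ne (by simpa [hy])
  obtain ⟨c, hc⟩ := exists_lintegral_eq_mul_lintegral_ker ν ℓ.linear
    μH[Module.finrank ℝ (LinearMap.ker ℓ.linear)] hv
  have hcone : MeasurableSet (coneOver z F) := (isCompact_coneOver hF).measurableSet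
  refine ⟨c, fun f hf => ?_⟩
  have hgm : Measurable ((coneOver z F).indicator f) := hf.indicator hcone
  rw [← lintegral_indicator hcone, ← lintegral_add_left_eq_self _ y,
    hc (fun x => (coneOver z F).indicator f (y + x)) (hgm.comp (measurable_const_add y)),
    ← lintegral_indicator measurableSet_Icc]
  refine mul_le_mul_right (lintegral_mono_ae ?_) _
  filter_upwards [Measure.ae_ne volume 1] with τ hτ
  exact lintegral_slice_coneOver_le hF.measurableSet hcone hℓ hz hy hf hτ

end Haar

section Polar

variable {n : ℕ} {P F : Set (Euc n)} {z : Euc n}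

lemma affineMap_finrank_ker_linear {ℓ : Euc n →ᵃ[ℝ] ℝ} (h : ℓ.linear ≠ 0) :
    (Module.finrank ℝ (LinearMap.ker ℓ.linear) : ℝ) = n - 1 := by
  have := Module.Dual.finrank_ker_add_one_of_ne_zero h
  rw [finrank_euclideanSpace_fin] at this
  exact eq_sub_of_add_eq (mod_cast this)

lemma IsFaceOf.hausdorffMeasure_lt_top (hF : IsFaceOf P F) (hP : IsCompact P) :
    μH[(n : ℝ) - 1] F < ⊤ := by
  have hFc := hF.isCompact hP
  rcases F.eq_empty_or_nonempty with rfl | ⟨y, hy⟩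
  · simp
  obtain ⟨ℓ, hℓ, -, rfl⟩ := hF
  rw [← affineMap_finrank_ker_linear (affineMap_linear_ne_zero hℓ hy.2)]
  exact hausdorffMeasure_lt_top_of_isCompact hFc fun x hx => hx.2

lemma IsFaceOf.exists_setLIntegral_coneOver_le (hF : IsFaceOf P F) (hP : IsCompact P)
    (hz : z ∈ interior P) :
    ∃ c : ℝ≥0, ∀ f : Euc n → ℝ≥0∞, Measurable f → ∫⁻ x in coneOver z F, f x ≤
      c * ∫⁻ τ in Set.Icc (0 : ℝ) 1, ∫⁻ y in F, f ((1 - τ) • y + τ • z) ∂μH[(n : ℝ) - 1] := by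
  have hFc := hF.isCompact hP
  rcases F.eq_empty_or_nonempty with rfl | ⟨y, hy⟩
  · exact ⟨0, fun f _ => by simp [coneOver]⟩
  obtain ⟨ℓ, hℓ, hpos, rfl⟩ := hF
  rw [← affineMap_finrank_ker_linear (affineMap_linear_ne_zero hℓ hy.2)]
  exact exists_setLIntegral_coneOver_le_of_affineMap volume hFc (fun x hx => hx.2)
    (affineMap_pos_of_mem_interior hℓ hpos hz).ne'

lemma inter_frontier_nonempty_of_isPreconnected {X : Type*} [TopologicalSpace X] {s t : Set X}
    (ht : IsPreconnected t) {x y : X} (hxt : x ∈ t) (hxs : x ∈ s) (hyt : y ∈ t) (hys : y ∉ s) :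
    (t ∩ frontier s).Nonempty := by
  by_contra hempty
  have hdisj : ∀ w ∈ t, w ∉ frontier s := fun w hwt hw => hempty ⟨w, hwt, hw⟩
  obtain ⟨w, -, hw, hw'⟩ := ht (interior s) (closure s)ᶜ isOpen_interior
    isClosed_closure.isOpen_compl
    (fun w hw => (em (w ∈ closure s)).imp_left fun h => by_contra fun hi => hdisj w hw ⟨h, hi⟩)
    ⟨x, hxt, by_contra fun hi => hdisj x hxt ⟨subset_closure hxs, hi⟩⟩
    ⟨y, hyt, fun hc => hdisj y hyt ⟨hc, fun hi => hys (interior_subset hi)⟩⟩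
  exact hw' (subset_closure (interior_subset hw))

lemma sdiff_singleton_subset_coneOver_frontier {E : Type*} [NormedAddCommGroup E]
    [NormedSpace ℝ E] {s : Set E} (hs : Bornology.IsBounded s) (z : E) :
    s \ {z} ⊆ coneOver z (frontier s) := by
  rintro x ⟨hx, hxz⟩
  let γ : ℝ → E := AffineMap.lineMap z x
  have hγ : Continuous γ := AffineMap.lineMap_continuous
  have hout : ∀ᶠ r : ℝ in atTop, γ r ∉ s :=
    ((antilipschitzWith_lineMap (Ne.symm hxz)).tendsto_cobounded.mono_left
      IsOrderBornology.atTop_le_cobounded).eventually hs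
  obtain ⟨r₀, hr₀, h1r₀⟩ := (hout.and (eventually_ge_atTop 1)).exists
  obtain ⟨_, ⟨r, hr, rfl⟩, hrs⟩ := inter_frontier_nonempty_of_isPreconnected
    ((isPreconnected_Ici (a := (1 : ℝ))).image γ hγ.continuousOn)
    ⟨1, Set.mem_Ici.2 le_rfl, AffineMap.lineMap_apply_one z x⟩ hx ⟨r₀, h1r₀, rfl⟩ hr₀
  have hr : 1 ≤ r := hr
  have hr0 : r ≠ 0 := by positivity
  refine ⟨(γ r, 1 - r⁻¹), ⟨hrs, ?_⟩, ?_⟩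
  · exact ⟨sub_nonneg.2 (inv_le_one_of_one_le₀ hr), sub_le_self _ (by positivity)⟩
  · simp only [γ, AffineMap.lineMap_apply_module, sub_sub_cancel, smul_add, smul_smul, mul_sub,
      inv_mul_cancel₀ hr0]
    module

end Polar

section System

variable {n : ℕ} (S : NSystem n)

lemma NSystem.exists_sigma_restrict_eq {F : Set (Euc n)} (hF : IsFacetOf S.P F) :
    ∃ c : ℝ≥0, c ≠ 0 ∧ S.σ.restrict F = c • μH[(n : ℝ) - 1].restrict F := by
  obtain ⟨c, hc, hσ⟩ := S.flat_bdry F hF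
  exact ⟨c.toNNReal, by simpa using hc, hσ⟩

lemma NSystem.sigma_frontier_lt_top : S.σ (frontier S.P) < ⊤ := by
  obtain ⟨𝓕, h𝓕, hcover⟩ := S.simple.1.exists_finset_facets
  refine (measure_mono hcover).trans_lt <| (measure_biUnion_lt_top 𝓕.finite_toSet fun F hF => ?_)
  obtain ⟨c, -, hσ⟩ := S.exists_sigma_restrict_eq (h𝓕 F hF)
  rw [← Measure.restrict_apply_self, hσ, Measure.smul_apply, Measure.restrict_apply_self]
  exact ENNReal.mul_lt_top ENNReal.coe_lt_top ((h𝓕 F hF).1.hausdorffMeasure_lt_top S.simple.1.1)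

variable {z : Euc n}

lemma NSystem.exists_setLIntegral_coneOver_le {F : Set (Euc n)} (hF : IsFacetOf S.P F)
    (hz : z ∈ interior S.P) :
    ∃ C : ℝ≥0, ∀ f : Euc n → ℝ≥0∞, Measurable f → ∫⁻ x in coneOver z F, f x ≤
      C * ∫⁻ τ in Set.Icc (0 : ℝ) 1, ∫⁻ y in frontier S.P, f ((1 - τ) • y + τ • z) ∂S.σ := by
  obtain ⟨c, hc, hσ⟩ := S.exists_sigma_restrict_eq hF
  obtain ⟨C, hC⟩ := hF.1.exists_setLIntegral_coneOver_le S.simple.1.1 hz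
  refine ⟨C * c⁻¹, fun f hf => (hC f hf).trans ?_⟩
  have hH : μH[(n : ℝ) - 1].restrict F = c⁻¹ • S.σ.restrict F := by
    rw [hσ, smul_smul, inv_mul_cancel₀ hc, one_smul]
  simp only [hH, lintegral_smul_measure, ENNReal.smul_def, smul_eq_mul]
  rw [lintegral_const_mul' _ _ ENNReal.coe_ne_top, ENNReal.coe_mul, mul_assoc]
  gcongr
  exact hF.1.subset_frontier

theorem NSystem.exists_setLIntegral_le_polar [NeZero n] (hz : z ∈ interior S.P) :
    ∃ C : ℝ≥0, ∀ f : Euc n → ℝ≥0∞, Measurable f → ∫⁻ x in S.P, f x ≤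
      C * ∫⁻ τ in Set.Icc (0 : ℝ) 1, ∫⁻ y in frontier S.P, f ((1 - τ) • y + τ • z) ∂S.σ := by
  obtain ⟨𝓕, h𝓕, hcover⟩ := S.simple.1.exists_finset_facets
  choose C hC using fun F : 𝓕 => S.exists_setLIntegral_coneOver_le (h𝓕 F F.2) hz
  refine ⟨∑ F, C F, fun f hf => ?_⟩
  have hsub : S.P \ {z} ⊆ ⋃ F : 𝓕, coneOver z F := by
    refine (sdiff_singleton_subset_coneOver_frontier S.simple.1.1.isBounded z).trans ?_
    rintro _ ⟨⟨y, τ⟩, ⟨hy, hτ⟩, rfl⟩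
    obtain ⟨F, hF, hyF⟩ := Set.mem_iUnion₂.1 (hcover hy)
    exact Set.mem_iUnion.2 ⟨⟨F, hF⟩, (y, τ), ⟨hyF, hτ⟩, rfl⟩
  calc ∫⁻ x in S.P, f x = ∫⁻ x in S.P \ {z}, f x :=
        setLIntegral_congr (sdiff_null_ae_eq_self (measure_singleton z)).symm
    _ ≤ ∑ F : 𝓕, ∫⁻ x in coneOver z F, f x := by
        rw [← tsum_fintype (L := .unconditional _)]
        exact (lintegral_mono_set hsub).trans (lintegral_iUnion_le _ f)
    _ ≤ ∑ F : 𝓕, C F * ∫⁻ τ in Set.Icc (0 : ℝ) 1, ∫⁻ y in frontier S.P,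
          f ((1 - τ) • y + τ • z) ∂S.σ := Finset.sum_le_sum fun F _ => hC F f hf
    _ = _ := by rw [← Finset.sum_mul, ENNReal.ofNNReal_finsetSum]

end System

/-! ### Normalized functions on a system -/

section Mass

variable {n : ℕ} (S : NSystem n)

lemma NSystem.isClosed : IsClosed S.P := S.simple.1.isClosed

lemma NSystem.convex : Convex ℝ S.P := S.simple.1.convex

lemma NSystem.frontier_subset : frontier S.P ⊆ S.P := S.isClosed.frontier_subset

lemma NSystem.closure_interior_eq : closure (interior S.P) = S.P := by
  rw [S.convex.closure_interior_eq_closure_of_nonempty_interior S.simple.1.2.1,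
    S.isClosed.closure_eq]

lemma NSystem.exists_mu_restrict_eq :
    ∃ c : ℝ≥0, c ≠ 0 ∧ S.μ.restrict S.P = c • volume.restrict S.P := by
  obtain ⟨c, hc, hμ⟩ := S.flat
  refine ⟨c.toNNReal, by simpa using hc, ?_⟩
  rw [hμ, Measure.restrict_smul, Measure.restrict_restrict S.isClosed.measurableSet,
    Set.inter_self]
  rfl

lemma NSystem.volume_ne_top : volume S.P ≠ ⊤ := S.simple.1.1.measure_lt_top.ne

lemma NSystem.volume_ne_zero : volume S.P ≠ 0 :=
  (Measure.measure_pos_of_nonempty_interior _ S.simple.1.2.1).ne'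

lemma NSystem.mu_ne_top : S.μ S.P ≠ ⊤ := by
  obtain ⟨c, -, hμ⟩ := S.exists_mu_restrict_eq
  rw [← Measure.restrict_apply_self, hμ, Measure.smul_apply, Measure.restrict_apply_self]
  exact ENNReal.mul_ne_top ENNReal.coe_ne_top S.volume_ne_top

lemma NSystem.mu_ne_zero : S.μ S.P ≠ 0 := by
  obtain ⟨c, hc, hμ⟩ := S.exists_mu_restrict_eq
  rw [← Measure.restrict_apply_self, hμ, Measure.smul_apply, Measure.restrict_apply_self]
  exact mul_ne_zero (ENNReal.coe_ne_zero.2 hc) S.volume_ne_zero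

lemma NSystem.ae_mem_interior : ∀ᵐ x ∂(S.μ.restrict S.P), x ∈ interior S.P := by
  obtain ⟨c, -, hμ⟩ := S.exists_mu_restrict_eq
  rw [hμ]
  refine Measure.ae_smul_measure ((ae_restrict_iff' S.isClosed.measurableSet).2 ?_) c
  filter_upwards [measure_eq_zero_iff_ae_notMem.1 (S.convex.addHaar_frontier volume)] with x hx hxP
  exact not_not.1 fun h => hx ⟨subset_closure hxP, h⟩

variable {S} {u : Euc n → ℝ≥0∞} {p : ℝ}

lemma MExp.aemeasurable (hu : u ∈ MExp S p) : AEMeasurable u (S.μ.restrict S.P) :=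
  aemeasurable_of_lowerSemicontinuousOn S.isClosed.measurableSet hu.1

lemma MExp.convexFnOn (hu : u ∈ MExp S p) : ConvexFnOn S.P u := hu.2.2.1.convexFnOn

lemma MExp.setLIntegral_volume_eq (hu : u ∈ MExp S p) : ∫⁻ x in S.P, u x = volume S.P := by
  obtain ⟨c, hc, hμ⟩ := S.exists_mu_restrict_eq
  have h := hu.2.2.2.1
  rw [← Measure.restrict_apply_self S.μ, hμ, lintegral_smul_measure, Measure.smul_apply,
    Measure.restrict_apply_self] at h
  exact (ENNReal.mul_right_inj (ENNReal.coe_ne_zero.2 hc) ENNReal.coe_ne_top).1 h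

lemma MExp.le_div_of_ball_subset (hu : u ∈ MExp S p) {x : Euc n} {r : ℝ} (hr : 0 < r)
    (hball : Metric.ball x r ⊆ S.P) : u x ≤ volume S.P / volume (Metric.ball x r) := by
  rw [ENNReal.le_div_iff_mul_le (Or.inl (Metric.measure_ball_pos _ _ hr).ne')
    (Or.inl measure_ball_lt_top.ne), mul_comm, ← MExp.setLIntegral_volume_eq hu]
  exact ((MExp.convexFnOn hu).mono hball).measure_ball_mul_le_setLIntegral
    ((aemeasurable_of_lowerSemicontinuousOn S.isClosed.measurableSet hu.1).mono_measure
      (Measure.restrict_mono_set _ hball)) |>.trans (lintegral_mono_set hball)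

variable (S) in
lemma NSystem.exists_forall_mem_MExp_le {x : Euc n} (hx : x ∈ interior S.P) :
    ∃ B ≠ ⊤, ∀ u ∈ MExp S p, u x ≤ B := by
  obtain ⟨r, hr, hball⟩ := Metric.mem_nhds_iff.1 (mem_interior_iff_mem_nhds.1 hx)
  exact ⟨_, ENNReal.div_ne_top S.volume_ne_top (Metric.measure_ball_pos _ _ hr).ne',
    fun u hu => MExp.le_div_of_ball_subset hu hr hball⟩

end Mass

/-! ### Bounds in `L^q` by the boundary energy -/

section Ray

variable {n : ℕ} {K : Set (Euc n)} {u : Euc n → ℝ≥0∞} {y z w : Euc n} {r s τ : ℝ}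

lemma ConvexFnOn.smul_add_smul_le_add (hu : ConvexFnOn K u) (hy : y ∈ K) (hz : z ∈ K)
    (hτ : τ ∈ Set.Icc (0 : ℝ) 1) : u ((1 - τ) • y + τ • z) ≤ u y + u z :=
  (hu hy hz hτ.1 hτ.2).trans <| add_le_add
    (mul_le_of_le_one_left' (ENNReal.ofReal_le_one.2 (sub_le_self _ hτ.1)))
    (mul_le_of_le_one_left' (ENNReal.ofReal_le_one.2 hτ.2))

lemma ball_smul_add_smul_subset (hK : Convex ℝ K) (hy : y ∈ K) (hz : Metric.ball z r ⊆ K)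
    (h0 : 0 < τ) (h1 : τ ≤ 1) : Metric.ball ((1 - τ) • y + τ • z) (τ * r) ⊆ K := by
  intro w hw
  have hw' : w = (1 - τ) • y + τ • (z + τ⁻¹ • (w - ((1 - τ) • y + τ • z))) := by
    rw [smul_add, smul_smul, mul_inv_cancel₀ h0.ne']
    module
  rw [hw']
  refine hK hy (hz ?_) (sub_nonneg.2 h1) h0.le (sub_add_cancel 1 τ)
  rw [mem_ball_iff_norm, add_sub_cancel_left, norm_smul, norm_inv, Real.norm_of_nonneg h0.le,
    inv_mul_lt_iff₀ h0]
  rwa [mem_ball_iff_norm] at hw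

lemma mul_le_dist_of_notMem_interior (hK : Convex ℝ K) (hy : y ∈ K) (hz : Metric.ball z r ⊆ K)
    (hτ : τ ∈ Set.Icc (0 : ℝ) 1) (hw : w ∉ interior K) :
    τ * r ≤ dist w ((1 - τ) • y + τ • z) := by
  rcases hτ.1.eq_or_lt with h0 | h0
  · rw [← h0, zero_mul]
    exact dist_nonneg
  · exact not_lt.1 fun h => hw <|
      interior_maximal (ball_smul_add_smul_subset hK hy hz h0 hτ.2) Metric.isOpen_ball h

lemma le_of_smul_add_smul_mem_ball (hK : Convex ℝ K) (hw : w ∈ K) (hz : Metric.ball z r ⊆ K)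
    (hr : 0 < r) (hs : s ∈ Set.Icc (0 : ℝ) 1) (hτ : 0 ≤ τ) (hy : y ∉ interior K)
    (h : (1 - s) • w + s • z ∈ Metric.ball ((1 - τ) • y + τ • z) (τ * r)) :
    s ≤ τ * (1 + dist z y / r) := by
  have hyτ : dist ((1 - τ) • y + τ • z) y = τ * dist z y := by
    rw [dist_eq_norm, dist_eq_norm, ← Real.norm_of_nonneg hτ, ← norm_smul,
      Real.norm_of_nonneg hτ]
    congr 1
    module
  have hle : s * r ≤ τ * r + τ * dist z y := calc
    s * r ≤ dist y ((1 - s) • w + s • z) := mul_le_dist_of_notMem_interior hK hw hz hs hy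
    _ ≤ dist ((1 - s) • w + s • z) ((1 - τ) • y + τ • z) + dist ((1 - τ) • y + τ • z) y :=
      (dist_comm _ _).trans_le (dist_triangle _ _ _)
    _ ≤ τ * r + τ * dist z y := by rw [hyτ]; gcongr; exact (Metric.mem_ball.1 h).le
  calc s ≤ (τ * r + τ * dist z y) / r := (le_div_iff₀ hr).2 hle
    _ = τ * (1 + dist z y / r) := by field_simp

end Ray

section Bounds

variable {n : ℕ} (S : NSystem n) {z : Euc n} {r : ℝ}

variable {S} in
lemma ConvexFnOn.setLIntegral_frontier_indicator_ball_le {u : Euc n → ℝ≥0∞} {y : Euc n} {s τ : ℝ}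
    (hu : ConvexFnOn S.P u) (hr : 0 < r) (hz : Metric.ball z r ⊆ S.P) (hy : y ∈ frontier S.P)
    (hs : s ∈ Set.Icc (0 : ℝ) 1) (hτ : 0 ≤ τ) :
    ∫⁻ w in frontier S.P, (Metric.ball ((1 - τ) • y + τ • z) (τ * r)).indicator u
        ((1 - s) • w + s • z) ∂S.σ ≤
      (Set.Icc 0 (τ * (1 + Metric.diam S.P / r))).indicator
        (fun _ => ∫⁻ w in frontier S.P, (u w + u z) ∂S.σ) s := by
  have hzP : z ∈ S.P := hz (Metric.mem_ball_self hr)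
  by_cases hsL : s ∈ Set.Icc 0 (τ * (1 + Metric.diam S.P / r))
  · rw [Set.indicator_of_mem hsL]
    exact setLIntegral_mono' isClosed_frontier.measurableSet fun w hw =>
      (Set.indicator_le_self _ _ _).trans
        (hu.smul_add_smul_le_add (S.frontier_subset hw) hzP hs)
  · refine (setLIntegral_eq_zero isClosed_frontier.measurableSet fun w hw => ?_).trans_le bot_le
    refine Set.indicator_of_notMem (fun hmem => hsL ⟨hs.1, ?_⟩) _
    refine (le_of_smul_add_smul_mem_ball S.convex (S.frontier_subset hw) hz hr hs hτ hy.2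
      hmem).trans ?_
    gcongr
    exact Metric.dist_le_diam_of_mem S.simple.1.1.isBounded hzP (S.frontier_subset hy)

lemma NSystem.exists_setLIntegral_ball_le [NeZero n] (hr : 0 < r) (hz : Metric.ball z r ⊆ S.P) :
    ∃ C : ℝ≥0, ∀ u, ConvexFnOn S.P u → LowerSemicontinuousOn u S.P → ∀ y ∈ frontier S.P,
      ∀ τ ∈ Set.Ioc (0 : ℝ) 1, ∫⁻ x in Metric.ball ((1 - τ) • y + τ • z) (τ * r), u x ≤
        C * ENNReal.ofReal τ * ∫⁻ y in frontier S.P, (u y + u z) ∂S.σ := by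
  obtain ⟨C, hC⟩ := S.exists_setLIntegral_le_polar
    (interior_maximal hz Metric.isOpen_ball (Metric.mem_ball_self hr))
  set L := 1 + Metric.diam S.P / r
  refine ⟨C * L.toNNReal, fun u hu hlsc y hy τ hτ => ?_⟩
  set B := Metric.ball ((1 - τ) • y + τ • z) (τ * r)
  set W := ∫⁻ y in frontier S.P, (u y + u z) ∂S.σ
  have hB : B ⊆ S.P := ball_smul_add_smul_subset S.convex (S.frontier_subset hy) hz hτ.1 hτ.2
  calc ∫⁻ x in B, u x = ∫⁻ x in S.P, B.indicator u x := by
        rw [lintegral_indicator measurableSet_ball, Measure.restrict_restrict measurableSet_ball,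
          Set.inter_eq_left.2 hB]
    _ ≤ C * ∫⁻ s, (Set.Icc 0 (τ * L)).indicator (fun _ => W) s := by
        refine (hC _ (measurable_indicator_of_lowerSemicontinuousOn measurableSet_ball
          (hlsc.mono hB))).trans (mul_le_mul_right ?_ _)
        exact (setLIntegral_mono' measurableSet_Icc fun s hs =>
          hu.setLIntegral_frontier_indicator_ball_le hr hz hy hs hτ.1.le).trans
          (setLIntegral_le_lintegral _ _)
    _ = (C * L.toNNReal : ℝ≥0) * ENNReal.ofReal τ * W := by
        rw [lintegral_indicator_const measurableSet_Icc, Real.volume_Icc, sub_zero,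
          ENNReal.ofReal_mul hτ.1.le, ENNReal.coe_mul, ENNReal.ofNNReal_toNNReal]
        ring

lemma NSystem.exists_le_rpow_mul_lintegral [NeZero n] (hr : 0 < r) (hz : Metric.ball z r ⊆ S.P) :
    ∃ C : ℝ≥0, ∀ u, ConvexFnOn S.P u → LowerSemicontinuousOn u S.P → ∀ y ∈ frontier S.P,
      ∀ τ ∈ Set.Ioc (0 : ℝ) 1, u ((1 - τ) • y + τ • z) ≤
        C * ENNReal.ofReal τ ^ (1 - n : ℝ) * ∫⁻ y in frontier S.P, (u y + u z) ∂S.σ := by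
  obtain ⟨C, hC⟩ := S.exists_setLIntegral_ball_le hr hz
  set V := volume (Metric.ball (0 : Euc n) r)
  have hV0 : V ≠ 0 := (Metric.measure_ball_pos _ _ hr).ne'
  have hVt : V ≠ ⊤ := measure_ball_lt_top.ne
  refine ⟨(C / V).toNNReal, fun u hu hlsc y hy τ hτ => ?_⟩
  set W := ∫⁻ y in frontier S.P, (u y + u z) ∂S.σ
  set t := ENNReal.ofReal τ
  have ht0 : t ≠ 0 := by simpa [t] using hτ.1
  have htt : t ≠ ⊤ := ENNReal.ofReal_ne_top
  have hball := ball_smul_add_smul_subset S.convex (S.frontier_subset hy) hz hτ.1 hτ.2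
  have hvol : volume (Metric.ball ((1 - τ) • y + τ • z) (τ * r)) = t ^ (n : ℝ) * V := by
    rw [Measure.addHaar_ball_mul_of_pos _ _ hτ.1, finrank_euclideanSpace_fin,
      ENNReal.ofReal_pow hτ.1.le, ENNReal.rpow_natCast]
  have hmean : u ((1 - τ) • y + τ • z) * (t ^ (n : ℝ) * V) ≤ C * t * W := by
    rw [← hvol, mul_comm]
    exact ((hu.mono hball).measure_ball_mul_le_setLIntegral
      (aemeasurable_of_lowerSemicontinuousOn measurableSet_ball (hlsc.mono hball))).trans
      (hC u hu hlsc y hy τ hτ)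
  have htn0 : t ^ (n : ℝ) ≠ 0 := (ENNReal.rpow_pos (pos_iff_ne_zero.2 ht0) htt).ne'
  have htnt : t ^ (n : ℝ) ≠ ⊤ := ENNReal.rpow_ne_top_of_nonneg n.cast_nonneg htt
  calc u ((1 - τ) • y + τ • z) ≤ C * t * W / (t ^ (n : ℝ) * V) :=
        ENNReal.le_div_iff_mul_le (.inl (mul_ne_zero htn0 hV0))
          (.inl (ENNReal.mul_ne_top htnt hVt)) |>.2 hmean
    _ = C / V * (t / t ^ (n : ℝ)) * W := by
        simp only [ENNReal.div_eq_inv_mul, ENNReal.mul_inv (.inl htn0) (.inl htnt)]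
        ring
    _ = _ := by
        rw [ENNReal.coe_toNNReal (ENNReal.div_ne_top ENNReal.coe_ne_top hV0),
          ENNReal.rpow_sub _ _ ht0 htt, ENNReal.rpow_one]

lemma setLIntegral_ofReal_rpow_lt_top {a : ℝ} (ha : -1 < a) :
    ∫⁻ τ in Set.Icc (0 : ℝ) 1, ENNReal.ofReal τ ^ a < ⊤ := by
  have hint : IntegrableOn (fun τ : ℝ => τ ^ a) (Set.Ioc 0 1) :=
    (intervalIntegrable_iff_integrableOn_Ioc_of_le zero_le_one).1
      (intervalIntegral.intervalIntegrable_rpow' ha)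
  rw [setLIntegral_congr (Ioc_ae_eq_Icc (μ := volume)).symm]
  refine lt_of_eq_of_lt (setLIntegral_congr_fun measurableSet_Ioc fun τ hτ => ?_)
    hint.setLIntegral_lt_top
  exact ENNReal.ofReal_rpow_of_pos hτ.1

lemma ennreal_rpow_eq_rpow_sub_one_mul (b : ℝ≥0∞) {q : ℝ} (hq : 1 ≤ q) :
    b ^ q = b ^ (q - 1) * b := by
  nth_rw 3 [← ENNReal.rpow_one b]
  rw [← ENNReal.rpow_add_of_nonneg _ _ (sub_nonneg.2 hq) zero_le_one, sub_add_cancel]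

variable {S} in
lemma ConvexFnOn.setLIntegral_frontier_rpow_le {u : Euc n → ℝ≥0∞} (hu : ConvexFnOn S.P u)
    (hlsc : LowerSemicontinuousOn u S.P) (hz : z ∈ S.P) {τ : ℝ} (hτ : τ ∈ Set.Icc (0 : ℝ) 1)
    {q : ℝ} (hq : 1 ≤ q) {M : ℝ≥0∞} (hM : ∀ y ∈ frontier S.P, u ((1 - τ) • y + τ • z) ≤ M) :
    ∫⁻ y in frontier S.P, u ((1 - τ) • y + τ • z) ^ q ∂S.σ ≤
      M ^ (q - 1) * ∫⁻ y in frontier S.P, (u y + u z) ∂S.σ := by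
  have hm : AEMeasurable (fun y => u y + u z) (S.σ.restrict (frontier S.P)) :=
    (aemeasurable_of_lowerSemicontinuousOn isClosed_frontier.measurableSet
      (hlsc.mono S.frontier_subset)).add_const _
  rw [← lintegral_const_mul'' _ hm]
  refine setLIntegral_mono' isClosed_frontier.measurableSet fun y hy => ?_
  rw [ennreal_rpow_eq_rpow_sub_one_mul _ hq]
  gcongr
  · exact hM y hy
  · exact hu.smul_add_smul_le_add (S.frontier_subset hy) hz hτ

lemma NSystem.exists_setLIntegral_rpow_le_of_ball_subset [NeZero n] (hr : 0 < r)
    (hz : Metric.ball z r ⊆ S.P) {q : ℝ} (hq : 1 ≤ q) (hqn : (q - 1) * (n - 1) < 1) :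
    ∃ C : ℝ≥0, ∀ u, ConvexFnOn S.P u → LowerSemicontinuousOn u S.P →
      ∫⁻ x in S.P, u x ^ q ≤ C * (∫⁻ y in frontier S.P, (u y + u z) ∂S.σ) ^ q := by
  obtain ⟨C, hC⟩ := S.exists_setLIntegral_le_polar
    (interior_maximal hz Metric.isOpen_ball (Metric.mem_ball_self hr))
  obtain ⟨Q, hQ⟩ := S.exists_le_rpow_mul_lintegral hr hz
  have hq1 : 0 ≤ q - 1 := sub_nonneg.2 hq
  set a : ℝ := (1 - n) * (q - 1)
  have hJ : ∫⁻ τ in Set.Icc (0 : ℝ) 1, ENNReal.ofReal τ ^ a < ⊤ :=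
    setLIntegral_ofReal_rpow_lt_top (by linear_combination hqn)
  set J := ∫⁻ τ in Set.Icc (0 : ℝ) 1, ENNReal.ofReal τ ^ a
  refine ⟨C * (Q ^ (q - 1) * J.toNNReal), fun u hu hlsc => ?_⟩
  set W := ∫⁻ y in frontier S.P, (u y + u z) ∂S.σ
  have hslice : ∀ τ ∈ Set.Ioc (0 : ℝ) 1, ∫⁻ y in frontier S.P,
      S.P.indicator u ((1 - τ) • y + τ • z) ^ q ∂S.σ ≤
        ENNReal.ofReal τ ^ a * (Q ^ (q - 1) * W ^ q) := fun τ hτ => calc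
    _ ≤ ∫⁻ y in frontier S.P, u ((1 - τ) • y + τ • z) ^ q ∂S.σ := by
        gcongr
        exact Set.indicator_le_self _ _ _
    _ ≤ (Q * ENNReal.ofReal τ ^ (1 - n : ℝ) * W) ^ (q - 1) * W :=
        hu.setLIntegral_frontier_rpow_le hlsc (hz (Metric.mem_ball_self hr)) ⟨hτ.1.le, hτ.2⟩ hq
          fun y hy => hQ u hu hlsc y hy τ hτ
    _ = _ := by
        rw [ennreal_rpow_eq_rpow_sub_one_mul W hq, ENNReal.mul_rpow_of_nonneg _ _ hq1,
          ENNReal.mul_rpow_of_nonneg _ _ hq1, ← ENNReal.rpow_mul]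
        ring
  calc ∫⁻ x in S.P, u x ^ q = ∫⁻ x in S.P, S.P.indicator u x ^ q :=
        setLIntegral_congr_fun S.isClosed.measurableSet fun x hx => by
          rw [Set.indicator_of_mem hx]
    _ ≤ C * ∫⁻ τ in Set.Icc (0 : ℝ) 1, ENNReal.ofReal τ ^ a * (Q ^ (q - 1) * W ^ q) := by
        refine (hC _ ((measurable_indicator_of_lowerSemicontinuousOn
          S.isClosed.measurableSet hlsc).pow_const q)).trans (mul_le_mul_right ?_ _)
        rw [setLIntegral_congr (Ioc_ae_eq_Icc (μ := volume)).symm,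
          setLIntegral_congr (Ioc_ae_eq_Icc (μ := volume)).symm]
        exact setLIntegral_mono' measurableSet_Ioc hslice
    _ = _ := by
        rw [lintegral_mul_const _ (by fun_prop), ENNReal.coe_mul, ENNReal.coe_mul,
          ENNReal.coe_toNNReal hJ.ne, ENNReal.coe_rpow_of_nonneg _ hq1]
        ring

theorem NSystem.exists_setLIntegral_rpow_le {p q : ℝ} (hq : 1 ≤ q)
    (hqn : (q - 1) * (n - 1) < 1) {E : ℝ≥0∞} (hE : E ≠ ⊤) :
    ∃ C ≠ ⊤, ∀ u ∈ MExp S p, Upf S u ≤ E → ∫⁻ x in S.P, u x ^ q ∂S.μ ≤ C := by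
  obtain ⟨z, hz⟩ := S.simple.1.2.1
  obtain ⟨B, hB, huB⟩ := S.exists_forall_mem_MExp_le (p := p) hz
  have hq0 : 0 ≤ q := zero_le_one.trans hq
  rcases eq_or_ne n 0 with rfl | hn
  · refine ⟨B ^ q * S.μ S.P, ENNReal.mul_ne_top (ENNReal.rpow_ne_top_of_nonneg hq0 hB) S.mu_ne_top,
      fun u hu _ => ?_⟩
    rw [← setLIntegral_const]
    exact lintegral_mono fun x => ENNReal.rpow_le_rpow (Subsingleton.elim z x ▸ huB u hu) hq0
  have : NeZero n := ⟨hn⟩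
  obtain ⟨r, hr, hball⟩ := Metric.mem_nhds_iff.1 (mem_interior_iff_mem_nhds.1 hz)
  obtain ⟨C, hC⟩ := S.exists_setLIntegral_rpow_le_of_ball_subset hr hball hq hqn
  obtain ⟨c, -, hμ⟩ := S.exists_mu_restrict_eq
  refine ⟨c * (C * (S.μ S.P * E + B * S.σ (frontier S.P)) ^ q), ?_, fun u hu hU => ?_⟩
  · have := S.mu_ne_top
    have := S.sigma_frontier_lt_top.ne
    finiteness
  have hW : ∫⁻ y in frontier S.P, (u y + u z) ∂S.σ ≤ S.μ S.P * E + B * S.σ (frontier S.P) := by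
    rw [lintegral_add_right _ measurable_const, setLIntegral_const]
    gcongr
    · rwa [Upf, ENNReal.inv_mul_le_iff S.mu_ne_zero S.mu_ne_top] at hU
    · exact huB u hu
  rw [hμ, lintegral_smul_measure]
  exact mul_le_mul_right ((hC u (MExp.convexFnOn hu) hu.1).trans
    (mul_le_mul_right (ENNReal.rpow_le_rpow hW hq0) _)) _

end Bounds

/-! ### Convergence in `L^p` from pointwise convergence and a bound in `L^q` -/

section Lp

variable {α ι : Type*} [MeasurableSpace α] {ν : Measure α} {l : Filter ι} {p q : ℝ}

lemma ennreal_rpow_le_min_rpow_add (a : ℝ≥0∞) {M : ℝ≥0} (hM : M ≠ 0) (hp : 0 < p) (hpq : p < q) :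
    a ^ p ≤ min a M ^ p + (M : ℝ≥0∞) ^ (p - q) * a ^ q := by
  rcases le_total a M with ha | ha
  · rw [min_eq_left ha]
    exact le_self_add
  refine le_trans ?_ le_add_self
  rcases eq_or_ne a ⊤ with rfl | hat
  · have hM' : (M : ℝ≥0∞) ^ (p - q) ≠ 0 :=
      (ENNReal.rpow_pos (by positivity) ENNReal.coe_ne_top).ne'
    rw [ENNReal.top_rpow_of_pos (hp.trans hpq), ENNReal.mul_top hM']
    exact le_top
  have ha0 : a ≠ 0 := (lt_of_lt_of_le (by positivity) ha).ne'
  calc a ^ p = a ^ (p - q) * a ^ q := by rw [← ENNReal.rpow_add _ _ ha0 hat, sub_add_cancel]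
    _ ≤ (M : ℝ≥0∞) ^ (p - q) * a ^ q := by
      rw [← neg_sub q p, ENNReal.rpow_neg, ENNReal.rpow_neg]
      gcongr

variable [l.IsCountablyGenerated]

lemma tendsto_lintegral_min_rpow_zero [IsFiniteMeasure ν] {h : ι → α → ℝ≥0∞}
    (hm : ∀ i, AEMeasurable (h i) ν) (h0 : ∀ᵐ x ∂ν, Tendsto (h · x) l (𝓝 0)) (M : ℝ≥0)
    (hp : 0 < p) : Tendsto (fun i => ∫⁻ x, min (h i x) M ^ p ∂ν) l (𝓝 0) := by
  refine tendsto_of_seq_tendsto fun s hs => ?_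
  have hlim : ∀ᵐ x ∂ν, Tendsto (fun k => min (h (s k) x) M ^ p) atTop (𝓝 0) := by
    filter_upwards [h0] with x hx
    have hmin : Tendsto (fun k => min (h (s k) x) M) atTop (𝓝 0) := by
      simpa using (hx.comp hs).min (tendsto_const_nhds (x := (M : ℝ≥0∞)))
    simpa [ENNReal.zero_rpow_of_pos hp] using hmin.ennrpow_const p
  rw [← lintegral_zero (μ := ν)]
  refine tendsto_lintegral_of_dominated_convergence' (fun _ => (M : ℝ≥0∞) ^ p)
    (fun k => ((hm _).min aemeasurable_const).pow_const p)
    (fun k => .of_forall fun x => ENNReal.rpow_le_rpow (min_le_right _ _) hp.le) ?_ hlim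
  rw [lintegral_const]
  finiteness

lemma tendsto_lintegral_rpow_zero [IsFiniteMeasure ν] {h : ι → α → ℝ≥0∞}
    (hm : ∀ i, AEMeasurable (h i) ν) (h0 : ∀ᵐ x ∂ν, Tendsto (h · x) l (𝓝 0)) (hp : 0 < p)
    (hpq : p < q) {C : ℝ≥0∞} (hC : C ≠ ⊤) (hb : ∀ i, ∫⁻ x, h i x ^ q ∂ν ≤ C) :
    Tendsto (fun i => ∫⁻ x, h i x ^ p ∂ν) l (𝓝 0) := by
  have htrunc : ∀ M : ℝ≥0, M ≠ 0 → ∀ i, ∫⁻ x, h i x ^ p ∂ν ≤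
      ∫⁻ x, min (h i x) M ^ p ∂ν + (M : ℝ≥0∞) ^ (p - q) * C := fun M hM i => calc
    ∫⁻ x, h i x ^ p ∂ν ≤ ∫⁻ x, (min (h i x) M ^ p + (M : ℝ≥0∞) ^ (p - q) * h i x ^ q) ∂ν :=
      lintegral_mono fun x => ennreal_rpow_le_min_rpow_add _ hM hp hpq
    _ = ∫⁻ x, min (h i x) M ^ p ∂ν + (M : ℝ≥0∞) ^ (p - q) * ∫⁻ x, h i x ^ q ∂ν := by
      rw [lintegral_add_left' (((hm i).min aemeasurable_const).pow_const _),
        lintegral_const_mul'' _ ((hm i).pow_const _)]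
    _ ≤ _ := by gcongr; exact hb i
  have htail : Tendsto (fun M : ℝ≥0 => (M : ℝ≥0∞) ^ (p - q) * C) atTop (𝓝 0) := by
    have hM := (ENNReal.tendsto_coe_nhds_top.2 (tendsto_id (α := ℝ≥0))).ennrpow_const (p - q)
    rw [ENNReal.top_rpow_of_neg (sub_neg.2 hpq)] at hM
    simpa using ENNReal.Tendsto.mul_const hM (.inr hC)
  refine ENNReal.tendsto_nhds_zero.2 fun ε hε => ?_
  have hε2 : 0 < ε / 2 := ENNReal.half_pos hε.ne'
  obtain ⟨M, htailM, hM⟩ := ((ENNReal.tendsto_nhds_zero.1 htail _ hε2).and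
    (eventually_ne_atTop 0)).exists
  filter_upwards [ENNReal.tendsto_nhds_zero.1 (tendsto_lintegral_min_rpow_zero hm h0 M hp) _ hε2]
    with i hi
  exact (htrunc M hM i).trans ((add_le_add hi htailM).trans_eq (ENNReal.add_halves ε))

theorem tendsto_lintegral_tsub_add_tsub_rpow [IsFiniteMeasure ν] {v : ι → α → ℝ≥0∞}
    {w : α → ℝ≥0∞} (hm : ∀ i, AEMeasurable (v i) ν) (hw : AEMeasurable w ν)
    (hlim : ∀ᵐ x ∂ν, Tendsto (v · x) l (𝓝 (w x))) (hp : 0 < p) (hpq : p < q) (hq : 1 ≤ q)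
    {C : ℝ≥0∞} (hC : C ≠ ⊤) (hb : ∀ i, ∫⁻ x, v i x ^ q ∂ν ≤ C) (hbw : ∫⁻ x, w x ^ q ∂ν ≤ C) :
    Tendsto (fun i => ∫⁻ x, ((v i x - w x) + (w x - v i x)) ^ p ∂ν) l (𝓝 0) := by
  have hq0 : 0 < q := zero_lt_one.trans_le hq
  refine tendsto_lintegral_rpow_zero (C := 2 ^ (q - 1) * (C + C))
    (fun i => ((hm i).sub hw).add (hw.sub (hm i))) ?_ hp hpq (by finiteness) fun i => ?_
  · filter_upwards [hlim, ae_lt_top' (hw.pow_const q) (ne_top_of_le_ne_top hC hbw)] with x hx hxq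
    have hxt : w x ≠ ⊤ := ((ENNReal.rpow_lt_top_iff_of_pos hq0).1 hxq).ne
    have hconst : Tendsto (fun _ : ι => w x) l (𝓝 (w x)) := tendsto_const_nhds
    simpa using (ENNReal.Tendsto.sub hx hconst (.inl hxt)).add
      (ENNReal.Tendsto.sub hconst hx (.inl hxt))
  · calc ∫⁻ x, ((v i x - w x) + (w x - v i x)) ^ q ∂ν
        ≤ ∫⁻ x, 2 ^ (q - 1) * (v i x ^ q + w x ^ q) ∂ν := lintegral_mono fun x =>
          (ENNReal.rpow_le_rpow (add_le_add tsub_le_self tsub_le_self) hq0.le).trans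
            (ENNReal.rpow_add_le_mul_rpow_add_rpow _ _ hq)
      _ = 2 ^ (q - 1) * (∫⁻ x, v i x ^ q ∂ν + ∫⁻ x, w x ^ q ∂ν) := by
          rw [lintegral_const_mul' _ _ (by finiteness),
            lintegral_add_left' ((hm i).pow_const _)]
      _ ≤ _ := by gcongr; exact hb i

end Lp

section Lp

variable {α : Type*} [MeasurableSpace α] {ν : Measure α} {q : ℝ} {v : ℕ → α → ℝ≥0∞}
  {w : α → ℝ≥0∞}

lemma lintegral_rpow_le_of_tendsto (hm : ∀ k, AEMeasurable (v k) ν)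
    (hlim : ∀ᵐ x ∂ν, Tendsto (v · x) atTop (𝓝 (w x))) {C : ℝ≥0∞}
    (hb : ∀ k, ∫⁻ x, v k x ^ q ∂ν ≤ C) : ∫⁻ x, w x ^ q ∂ν ≤ C := calc
  ∫⁻ x, w x ^ q ∂ν = ∫⁻ x, liminf (fun k => v k x ^ q) atTop ∂ν := by
    refine lintegral_congr_ae ?_
    filter_upwards [hlim] with x hx using (hx.ennrpow_const q).liminf_eq.symm
  _ ≤ liminf (fun k => ∫⁻ x, v k x ^ q ∂ν) atTop :=
    lintegral_liminf_le' fun k => (hm k).pow_const _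
  _ ≤ liminf (fun _ => C) atTop := liminf_le_liminf (.of_forall hb)
  _ = C := liminf_const _

lemma lintegral_eq_of_tendsto_of_lintegral_rpow_le [IsFiniteMeasure ν]
    (hm : ∀ k, AEMeasurable (v k) ν) (hlim : ∀ᵐ x ∂ν, Tendsto (v · x) atTop (𝓝 (w x)))
    (hq : 1 < q) {C : ℝ≥0∞} (hC : C ≠ ⊤) (hb : ∀ k, ∫⁻ x, v k x ^ q ∂ν ≤ C) {m : ℝ≥0∞}
    (hvm : ∀ k, ∫⁻ x, v k x ∂ν = m) : ∫⁻ x, w x ∂ν = m := by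
  have hw : AEMeasurable w ν := aemeasurable_of_tendsto_metrizable_ae _ hm hlim
  refine le_antisymm ?_ ?_
  · simpa using lintegral_rpow_le_of_tendsto (q := 1) hm hlim (by simpa using fun k => (hvm k).le)
  · have hL1 := (tendsto_lintegral_tsub_add_tsub_rpow hm hw hlim one_pos hq hq.le hC hb
      (lintegral_rpow_le_of_tendsto hm hlim hb)).const_add (∫⁻ x, w x ∂ν)
    simp only [ENNReal.rpow_one, add_zero] at hL1
    refine ge_of_tendsto' hL1 fun k => ?_
    rw [← hvm k, ← lintegral_add_left' hw]
    exact lintegral_mono fun x => le_add_tsub.trans (add_le_add_right le_self_add _)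

end Lp

/-! ### Compactness of sublevel sets of the energy -/

section Compactness

variable {n : ℕ} {S : NSystem n}

lemma exists_gt_sub_one_mul_lt_one {p d : ℝ} (h : (p - 1) * d < 1) : ∃ q > p, (q - 1) * d < 1 := by
  have hcont : ContinuousAt (fun q : ℝ => (q - 1) * d) p := by fun_prop
  exact (((hcont.eventually_lt_const h).filter_mono nhdsWithin_le_nhds).and
    (eventually_mem_nhdsWithin (s := Set.Ioi p))).exists.imp fun q hq => ⟨hq.2, hq.1⟩

instance NSystem.isFiniteMeasure_mu_restrict (S : NSystem n) :
    IsFiniteMeasure (S.μ.restrict S.P) :=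
  ⟨by simpa using S.mu_ne_top.lt_top⟩

lemma MExp.ne_top {p : ℝ} {u : Euc n → ℝ≥0∞} (hu : u ∈ MExp S p) {x : Euc n}
    (hx : x ∈ interior S.P) : u x ≠ ⊤ := by
  obtain ⟨B, hB, hle⟩ := S.exists_forall_mem_MExp_le hx
  exact ne_top_of_le_ne_top hB (hle u hu)

theorem MExp.tendsto_lintegral_tsub_add_tsub_rpow {ι : Type*} {l : Filter ι}
    [l.IsCountablyGenerated] {p r s : ℝ} {u : ι → Euc n → ℝ≥0∞} {w : Euc n → ℝ≥0∞}
    (hp : 1 ≤ p) (hpn : (p - 1) * (n - 1) < 1) (hu : ∀ i, u i ∈ MExp S r) (hw : w ∈ MExp S s)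
    {E : ℝ≥0∞} (hE : E ≠ ⊤) (hU : ∀ i, Upf S (u i) ≤ E) (hUw : Upf S w ≤ E)
    (hlim : ∀ x ∈ interior S.P, Tendsto (u · x) l (𝓝 (w x))) :
    Tendsto (fun i => ∫⁻ x in S.P, ((u i x - w x) + (w x - u i x)) ^ p ∂S.μ) l (𝓝 0) := by
  obtain ⟨q, hpq, hqn⟩ := exists_gt_sub_one_mul_lt_one hpn
  have hq : 1 ≤ q := hp.trans hpq.le
  obtain ⟨C, hC, hb⟩ := S.exists_setLIntegral_rpow_le (p := r) hq hqn hE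
  obtain ⟨C', hC', hb'⟩ := S.exists_setLIntegral_rpow_le (p := s) hq hqn hE
  exact _root_.tendsto_lintegral_tsub_add_tsub_rpow (fun i => MExp.aemeasurable (hu i))
    (MExp.aemeasurable hw) (S.ae_mem_interior.mono hlim) (one_pos.trans_le hp) hpq hq
    (max_ne_top hC hC') (fun i => (hb _ (hu i) (hU i)).trans (le_max_left _ _))
    ((hb' _ hw hUw).trans (le_max_right _ _))

section Limit

variable {p : ℝ} {u : ℕ → Euc n → ℝ≥0∞} {g : Euc n → ℝ≥0∞} {E : ℝ≥0∞}

lemma MExp.setLIntegral_eq_of_tendsto (hu : ∀ k, u k ∈ MExp S p) (hE : E ≠ ⊤)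
    (hU : ∀ k, Upf S (u k) ≤ E) (hlim : ∀ x ∈ interior S.P, Tendsto (u · x) atTop (𝓝 (g x))) :
    ∫⁻ x in S.P, g x ∂S.μ = S.μ S.P := by
  obtain ⟨q, hq, hqn⟩ := exists_gt_sub_one_mul_lt_one (p := 1) (d := n - 1) (by simp)
  obtain ⟨C, hC, hb⟩ := S.exists_setLIntegral_rpow_le hq.le hqn hE
  exact lintegral_eq_of_tendsto_of_lintegral_rpow_le (fun k => MExp.aemeasurable (hu k))
    (S.ae_mem_interior.mono hlim) hq hC (fun k => hb _ (hu k) (hU k)) fun k => (hu k).2.2.2.1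

lemma MExp.logConvexOn_of_tendsto (hu : ∀ k, u k ∈ MExp S p) (htop : ∀ x ∈ interior S.P, g x ≠ ⊤)
    (hlim : ∀ x ∈ interior S.P, Tendsto (u · x) atTop (𝓝 (g x))) :
    LogConvexOn (interior S.P) g :=
  .of_tendsto S.convex.interior (fun k => (hu k).2.2.1.mono interior_subset) hlim htop

lemma LogConvexOn.lscExtension_eq (hg : LogConvexOn (interior S.P) g)
    (htop : ∀ x ∈ interior S.P, g x ≠ ⊤) {x : Euc n} (hx : x ∈ interior S.P) :
    lscExtension (interior S.P) g x = g x :=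
  lscExtension_eq_of_continuousOn
    (hg.convexFnOn.continuousOn isOpen_interior S.convex.interior htop) hx

lemma LogConvexOn.lscExtension_mem_MExp (hg : LogConvexOn (interior S.P) g)
    (htop : ∀ x ∈ interior S.P, g x ≠ ⊤) (hmass : ∫⁻ x in S.P, g x ∂S.μ = S.μ S.P) :
    lscExtension (interior S.P) g ∈ MExp S 1 := by
  obtain ⟨x₀, hx₀, h0⟩ : ∃ x₀ ∈ interior S.P, g x₀ ≠ 0 := by
    by_contra! h
    exact S.mu_ne_zero <| hmass.symm.trans <|
      (lintegral_congr_ae (S.ae_mem_interior.mono h)).trans lintegral_zero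
  obtain ⟨c, hc, hcg⟩ := hg.exists_pos_le isOpen_interior S.convex.interior
    (S.simple.1.1.isBounded.subset interior_subset) htop hx₀ h0
  have hpos : ∀ x ∈ closure (interior S.P), lscExtension (interior S.P) g x ≠ 0 := fun x hx =>
    ((pos_iff_ne_zero.2 hc).trans_le (le_lscExtension hcg)).ne'
  have hint : ∫⁻ x in S.P, lscExtension (interior S.P) g x ∂S.μ = S.μ S.P :=
    (lintegral_congr_ae (S.ae_mem_interior.mono fun _ => hg.lscExtension_eq htop)).trans hmass
  have hlog := hg.lscExtension_closure S.convex.interior hpos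
  rw [S.closure_interior_eq] at hpos hlog
  exact ⟨lowerSemicontinuous_lscExtension.lowerSemicontinuousOn _,
    fun x hx => pos_iff_ne_zero.2 (hpos x hx), hlog, hint, by simpa [hint] using S.mu_ne_top.lt_top⟩

lemma MExp.Upf_lscExtension_le_liminf (hu : ∀ k, u k ∈ MExp S p)
    (htop : ∀ x ∈ interior S.P, g x ≠ ⊤)
    (hlim : ∀ x ∈ interior S.P, Tendsto (u · x) atTop (𝓝 (g x))) :
    Upf S (lscExtension (interior S.P) g) ≤ liminf (fun k => Upf S (u k)) atTop := by
  obtain ⟨x₀, hx₀⟩ := S.simple.1.2.1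
  have hle : ∀ y ∈ frontier S.P, lscExtension (interior S.P) g y ≤ liminf (u · y) atTop :=
    fun y hy => lscExtension_le_liminf_of_tendsto isOpen_interior S.convex.interior
      (fun k => by rw [S.closure_interior_eq]; exact MExp.convexFnOn (hu k)) hlim hx₀
      (htop x₀ hx₀) (by rw [S.closure_interior_eq]; exact S.frontier_subset hy)
  unfold Upf
  rw [ENNReal.liminf_const_mul_of_ne_zero_of_ne_top (ENNReal.inv_ne_zero.2 S.mu_ne_top)
    (ENNReal.inv_ne_top.2 S.mu_ne_zero)]
  gcongr
  have hm : MeasurableSet (frontier S.P) := isClosed_frontier.measurableSet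
  exact (setLIntegral_mono' hm hle).trans <| lintegral_liminf_le' fun k =>
    aemeasurable_of_lowerSemicontinuousOn hm ((hu k).1.mono S.frontier_subset)

end Limit

theorem MExp.exists_subseq_tendsto {p : ℝ} {u : ℕ → Euc n → ℝ≥0∞} (hu : ∀ k, u k ∈ MExp S p)
    {E : ℝ≥0∞} (hE : E ≠ ⊤) (hU : ∀ k, Upf S (u k) ≤ E) :
    ∃ φ : ℕ → ℕ, StrictMono φ ∧ ∃ w ∈ MExp S 1,
      (∀ x ∈ interior S.P, Tendsto (fun k => u (φ k) x) atTop (𝓝 (w x))) ∧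
      Upf S w ≤ liminf (fun k => Upf S (u (φ k))) atTop := by
  obtain ⟨φ, hφ, g, htop, hlim⟩ := ConvexFnOn.exists_subseq_tendsto isOpen_interior
    S.convex.interior (fun k => (MExp.convexFnOn (hu k)).mono interior_subset) fun x hx =>
      (S.exists_forall_mem_MExp_le hx).imp fun B hB => ⟨hB.1, fun k => hB.2 _ (hu k)⟩
  have hg := MExp.logConvexOn_of_tendsto (fun k => hu (φ k)) htop hlim
  refine ⟨φ, hφ, _, hg.lscExtension_mem_MExp htop ?_, fun x hx => ?_,
    MExp.Upf_lscExtension_le_liminf (fun k => hu (φ k)) htop hlim⟩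
  · exact MExp.setLIntegral_eq_of_tendsto (fun k => hu (φ k)) hE (fun k => hU (φ k)) hlim
  · rw [hg.lscExtension_eq htop hx]
    exact hlim x hx

end Compactness

/-! ### Entropy -/

/-- The function `y log y + 1 - y` on `[0, ∞]`, with the junk value `1` at `∞`. -/
def eklFun (y : ℝ≥0∞) : ℝ≥0∞ := ENNReal.ofReal (InformationTheory.klFun y.toReal)

lemma measurable_eklFun : Measurable eklFun :=
  (InformationTheory.measurable_klFun.comp ENNReal.measurable_toReal).ennreal_ofReal

lemma continuousAt_eklFun {y : ℝ≥0∞} (hy : y ≠ ⊤) : ContinuousAt eklFun y :=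
  ENNReal.continuous_ofReal.continuousAt.comp <|
    InformationTheory.continuous_klFun.continuousAt.comp (ENNReal.tendsto_toReal hy)

lemma eklFun_one : eklFun 1 = 0 := by simp [eklFun, InformationTheory.klFun_one]

lemma neg_xlogx_le_one (y : ℝ≥0∞) : -xlogx y ≤ 1 := by
  have h := InformationTheory.klFun_nonneg (x := y.toReal) ENNReal.toReal_nonneg
  rw [InformationTheory.klFun_apply] at h
  unfold xlogx
  linarith [ENNReal.toReal_nonneg (a := y)]

lemma eklFun_add_ofReal_neg_xlogx_add {y : ℝ≥0∞} (hy : y ≠ ⊤) :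
    eklFun y + ENNReal.ofReal (-xlogx y) + y = ENNReal.ofReal (xlogx y) + 1 := by
  lift y to ℝ≥0 using hy
  have hkl := InformationTheory.klFun_nonneg y.coe_nonneg
  simp only [eklFun, xlogx, ENNReal.coe_toReal]
  refine (ENNReal.toReal_eq_toReal_iff' (by finiteness) (by finiteness)).1 ?_
  rw [ENNReal.toReal_add, ENNReal.toReal_add, ENNReal.toReal_add, ENNReal.toReal_ofReal hkl,
    ENNReal.toReal_ofReal', ENNReal.toReal_ofReal', ENNReal.coe_toReal, ENNReal.toReal_one,
    InformationTheory.klFun_apply]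
  · linarith [max_zero_sub_eq_self ((y : ℝ) * Real.log y), max_comm 0 (-((y : ℝ) * Real.log y))]
  all_goals finiteness

lemma eklFun_le_rpow_add_one {y : ℝ≥0∞} (hy : y ≠ ⊤) {q : ℝ} (hq : 1 < q) :
    eklFun y ≤ ENNReal.ofReal (q - 1)⁻¹ * y ^ q + 1 := by
  lift y to ℝ≥0 using hy
  have hq0 : 0 < q - 1 := sub_pos.2 hq
  have hlog : y * Real.log y ≤ (q - 1)⁻¹ * y ^ q := by
    calc (y : ℝ) * Real.log y ≤ y * (y ^ (q - 1) / (q - 1)) := by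
          gcongr
          exact Real.log_le_rpow_div y.coe_nonneg hq0
      _ = (q - 1)⁻¹ * (y ^ (1 + (q - 1)) : ℝ) := by
          rw [Real.rpow_one_add' y.coe_nonneg (by linarith)]
          ring
      _ = (q - 1)⁻¹ * y ^ q := by rw [add_sub_cancel]
  calc eklFun y ≤ ENNReal.ofReal ((q - 1)⁻¹ * (y : ℝ) ^ q + 1) := by
        refine ENNReal.ofReal_le_ofReal ?_
        rw [InformationTheory.klFun_apply, ENNReal.coe_toReal]
        linarith [y.coe_nonneg]
    _ = ENNReal.ofReal (q - 1)⁻¹ * (y : ℝ≥0∞) ^ q + 1 := by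
        rw [ENNReal.ofReal_add (by positivity) zero_le_one, ENNReal.ofReal_mul (by positivity),
          ← ENNReal.ofReal_rpow_of_nonneg y.coe_nonneg (by linarith), ENNReal.ofReal_coe_nnreal,
          ENNReal.ofReal_one]

lemma eklFun_inv_two_mul_add_lt {a b : ℝ≥0∞} (ha : a ≠ ⊤) (hb : b ≠ ⊤) (hab : a ≠ b) :
    eklFun (2⁻¹ * (a + b)) < 2⁻¹ * (eklFun a + eklFun b) := by
  lift a to ℝ≥0 using ha
  lift b to ℝ≥0 using hb
  have ha' := InformationTheory.klFun_nonneg a.coe_nonneg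
  have hb' := InformationTheory.klFun_nonneg b.coe_nonneg
  have hlt := InformationTheory.strictConvexOn_klFun.2 (Set.mem_Ici.2 a.coe_nonneg)
    (Set.mem_Ici.2 b.coe_nonneg) (NNReal.coe_injective.ne (ENNReal.coe_injective.ne_iff.1 hab))
    (inv_pos.2 (two_pos (α := ℝ))) (inv_pos.2 two_pos) (by norm_num)
  simp only [smul_eq_mul, ← mul_add] at hlt
  have hinv : (2⁻¹ : ℝ≥0∞) = ENNReal.ofReal 2⁻¹ := by simp [ENNReal.ofReal_inv_of_pos]
  have hmid : (2⁻¹ * ((a : ℝ≥0∞) + b)).toReal = 2⁻¹ * (a + b : ℝ) := by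
    simp [ENNReal.toReal_mul, ENNReal.toReal_add]
  rw [eklFun, hmid, eklFun, eklFun, ENNReal.coe_toReal, ENNReal.coe_toReal,
    ← ENNReal.ofReal_add ha' hb', hinv, ← ENNReal.ofReal_mul (by norm_num)]
  exact (ENNReal.ofReal_lt_ofReal_iff_of_nonneg
    (InformationTheory.klFun_nonneg (by positivity))).2 hlt

lemma ennreal_inv_two_mul_add_self (a : ℝ≥0∞) : 2⁻¹ * (a + a) = a := by
  rw [← two_mul, ← mul_assoc, ENNReal.inv_mul_cancel two_ne_zero (by simp), one_mul]

lemma eklFun_inv_two_mul_add_le {a b : ℝ≥0∞} (ha : a ≠ ⊤) (hb : b ≠ ⊤) :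
    eklFun (2⁻¹ * (a + b)) ≤ 2⁻¹ * (eklFun a + eklFun b) := by
  rcases eq_or_ne a b with rfl | hab
  · rw [ennreal_inv_two_mul_add_self, ennreal_inv_two_mul_add_self]
  · exact (eklFun_inv_two_mul_add_lt ha hb hab).le

section Entropy

variable {n : ℕ} {S : NSystem n} {u w : Euc n → ℝ≥0∞} {p : ℝ}

/-- The negative `-S_𝒫(u)` of the entropy, as an element of `[0, ∞]`. The integrand `y log y` is
replaced by the nonnegative `y log y + 1 - y`; this changes nothing as `∫_P u dμ = μ(P)`. -/
def negEntropy (S : NSystem n) (u : Euc n → ℝ≥0∞) : ℝ≥0∞ :=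
  (S.μ S.P)⁻¹ * ∫⁻ x in S.P, eklFun (u x) ∂S.μ

lemma negEntropy_congr (h : Set.EqOn u w (interior S.P)) : negEntropy S u = negEntropy S w := by
  unfold negEntropy
  congr 1
  exact lintegral_congr_ae (S.ae_mem_interior.mono fun x hx => congrArg eklFun (h hx))

lemma negEntropy_one : negEntropy S 1 = 0 := by simp [negEntropy, eklFun_one]

lemma NSystem.one_mem_MExp (S : NSystem n) : 1 ∈ MExp S p :=
  ⟨continuousOn_const.lowerSemicontinuousOn, fun _ _ => one_pos, fun _ _ _ _ _ _ _ => by simp,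
    by simp, by simpa using S.mu_ne_top.lt_top⟩

lemma NSystem.Upf_one_ne_top (S : NSystem n) : Upf S 1 ≠ ⊤ := by
  refine ENNReal.mul_ne_top (ENNReal.inv_ne_top.2 S.mu_ne_zero) ?_
  simpa using S.sigma_frontier_lt_top.ne

lemma ereal_coe_sub_coe_add {B : ℝ≥0∞} (hB : B ≠ ⊤) (K : ℝ≥0∞) :
    (B : EReal) - ((K + B : ℝ≥0∞) : EReal) = -(K : EReal) := by
  lift B to ℝ≥0 using hB
  induction K with
  | top => simp
  | coe K =>
    rw [EReal.coe_ennreal_add, EReal.coe_nnreal_eq_coe_real, EReal.coe_nnreal_eq_coe_real,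
      ← EReal.coe_add, ← EReal.coe_sub, ← EReal.coe_neg, sub_add_cancel_right]

lemma lintegral_eklFun_add {α : Type*} [MeasurableSpace α] {ν : Measure α} [IsFiniteMeasure ν]
    {u : α → ℝ≥0∞} (hu : AEMeasurable u ν) (htop : ∀ᵐ x ∂ν, u x ≠ ⊤)
    (hmass : ∫⁻ x, u x ∂ν = ν Set.univ) :
    ∫⁻ x, eklFun (u x) ∂ν + ∫⁻ x, ENNReal.ofReal (-xlogx (u x)) ∂ν =
      ∫⁻ x, ENNReal.ofReal (xlogx (u x)) ∂ν := by
  have hlog : AEMeasurable (fun x => ENNReal.ofReal (-xlogx (u x))) ν :=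
    (hu.ennreal_toReal.mul
      (Real.measurable_log.comp_aemeasurable hu.ennreal_toReal)).neg.ennreal_ofReal
  have h := lintegral_congr_ae (htop.mono fun x => eklFun_add_ofReal_neg_xlogx_add)
  rw [lintegral_add_right' _ hu, lintegral_add_right' _ hlog,
    lintegral_add_right' _ aemeasurable_const, hmass, lintegral_one] at h
  exact (ENNReal.add_left_inj (measure_ne_top ν _)).1 h

lemma MExp.Spf_eq (hu : u ∈ MExp S p) : Spf S u = -(negEntropy S u : EReal) := by
  have htop : ∀ᵐ x ∂(S.μ.restrict S.P), u x ≠ ⊤ := S.ae_mem_interior.mono fun _ => MExp.ne_top hu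
  have hfin : ∫⁻ x in S.P, ENNReal.ofReal (-xlogx (u x)) ∂S.μ ≠ ⊤ := by
    refine ne_top_of_le_ne_top S.mu_ne_top <| (lintegral_mono fun x => ?_).trans_eq
      (setLIntegral_one S.P)
    exact ENNReal.ofReal_le_one.2 (neg_xlogx_le_one _)
  rw [Spf, ← lintegral_eklFun_add (MExp.aemeasurable hu) htop (by simpa using hu.2.2.2.1),
    ereal_coe_sub_coe_add hfin, negEntropy, EReal.coe_ennreal_mul, mul_neg, ← ENNReal.toReal_inv,
    EReal.coe_ennreal_toReal (ENNReal.inv_ne_top.2 S.mu_ne_zero)]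

lemma MExp.Fpf_eq (hu : u ∈ MExp S p) {T : ℝ≥0} (hN : T ≠ 0 ∨ negEntropy S u ≠ ⊤) :
    Fpf S T u = ((Upf S u + T * negEntropy S u : ℝ≥0∞) : EReal) := by
  rw [Fpf, MExp.Spf_eq hu]
  split_ifs with h
  · have htop : negEntropy S u = ⊤ := by simpa using h
    rw [htop, ENNReal.mul_top (ENNReal.coe_ne_zero.2 (hN.resolve_right (not_not.2 htop))), add_top,
      EReal.coe_ennreal_top]
  · rw [EReal.coe_ennreal_add, EReal.coe_ennreal_mul, mul_neg, sub_eq_add_neg, neg_neg]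
    rfl

lemma MExp.negEntropy_ne_top (hu : u ∈ MExp S p) (hU : Upf S u ≠ ⊤) : negEntropy S u ≠ ⊤ := by
  obtain ⟨q, hq, hqn⟩ := exists_gt_sub_one_mul_lt_one (p := 1) (d := n - 1) (by simp)
  obtain ⟨C, hC, hb⟩ := S.exists_setLIntegral_rpow_le (p := p) hq.le hqn hU
  refine ENNReal.mul_ne_top (ENNReal.inv_ne_top.2 S.mu_ne_zero) <| ne_top_of_le_ne_top ?_ <|
    lintegral_mono_ae <| S.ae_mem_interior.mono fun x hx =>
      eklFun_le_rpow_add_one (MExp.ne_top hu hx) hq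
  rw [lintegral_add_right' _ aemeasurable_const,
    lintegral_const_mul'' _ ((MExp.aemeasurable hu).pow_const q), setLIntegral_one]
  exact ENNReal.add_ne_top.2 ⟨ENNReal.mul_ne_top ENNReal.ofReal_ne_top
    (ne_top_of_le_ne_top hC (hb u hu le_rfl)), S.mu_ne_top⟩

lemma MExp.aemeasurable_eklFun (hu : u ∈ MExp S p) :
    AEMeasurable (fun x => eklFun (u x)) (S.μ.restrict S.P) :=
  measurable_eklFun.comp_aemeasurable (MExp.aemeasurable hu)

lemma MExp.negEntropy_le_liminf {v : ℕ → Euc n → ℝ≥0∞} (hv : ∀ k, v k ∈ MExp S p)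
    (hw : w ∈ MExp S 1)
    (hlim : ∀ x ∈ interior S.P, Tendsto (v · x) atTop (𝓝 (w x))) :
    negEntropy S w ≤ liminf (fun k => negEntropy S (v k)) atTop := by
  unfold negEntropy
  rw [ENNReal.liminf_const_mul_of_ne_zero_of_ne_top (ENNReal.inv_ne_zero.2 S.mu_ne_top)
    (ENNReal.inv_ne_top.2 S.mu_ne_zero)]
  gcongr
  refine (lintegral_congr_ae <| S.ae_mem_interior.mono fun x hx => ?_).trans_le
    (lintegral_liminf_le' fun k => MExp.aemeasurable_eklFun (hv k))
  exact ((continuousAt_eklFun (MExp.ne_top hw hx)).tendsto.comp (hlim x hx)).liminf_eq.symm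

end Entropy

/-! ### Strict convexity of the free energy -/

section Midpoint

variable {n : ℕ} {S : NSystem n} {K : Set (Euc n)} {u w : Euc n → ℝ≥0∞} {p : ℝ}

lemma LogConvexOn.add (hu : LogConvexOn K u) (hw : LogConvexOn K w) : LogConvexOn K (u + w) :=
  fun _ hx _ hy _ h0 h1 => (add_le_add (hu hx hy h0 h1) (hw hx hy h0 h1)).trans
    (ennreal_rpow_mul_rpow_add_le h0 h1)

lemma LogConvexOn.const_smul (hu : LogConvexOn K u) (c : ℝ≥0∞) : LogConvexOn K (c • u) := by
  intro x hx y hy t h0 h1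
  have h1' : 0 ≤ 1 - t := sub_nonneg.2 h1
  calc c * u ((1 - t) • x + t • y) ≤ c ^ ((1 - t) + t) * (u x ^ (1 - t) * u y ^ t) := by
        rw [sub_add_cancel, ENNReal.rpow_one]
        gcongr
        exact hu hx hy h0 h1
    _ = (c * u x) ^ (1 - t) * (c * u y) ^ t := by
        rw [ENNReal.rpow_add_of_nonneg _ _ h1' h0, ENNReal.mul_rpow_of_nonneg _ _ h1',
          ENNReal.mul_rpow_of_nonneg _ _ h0]
        ring

lemma MExp.inv_two_smul_add_mem (hu : u ∈ MExp S 1) (hw : w ∈ MExp S 1) :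
    (2⁻¹ : ℝ≥0∞) • (u + w) ∈ MExp S 1 := by
  have hmass : ∫⁻ x in S.P, ((2⁻¹ : ℝ≥0∞) • (u + w)) x ∂S.μ = S.μ S.P := by
    simp only [Pi.smul_apply, Pi.add_apply, smul_eq_mul]
    rw [lintegral_const_mul' _ _ (by simp), lintegral_add_right' _ (MExp.aemeasurable hw),
      hu.2.2.2.1, hw.2.2.2.1, ennreal_inv_two_mul_add_self]
  refine ⟨?_, fun x hx => ?_, (hu.2.2.1.add hw.2.2.1).const_smul _, hmass, ?_⟩
  · exact (ENNReal.continuous_const_mul (by simp)).comp_lowerSemicontinuousOn (hu.1.add hw.1)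
      fun a b hab => mul_le_mul_right hab _
  · exact ENNReal.mul_pos (by simp) (add_pos_of_pos_of_nonneg (hu.2.1 x hx) zero_le).ne'
  · simpa only [ENNReal.rpow_one, hmass] using S.mu_ne_top.lt_top

lemma MExp.Upf_inv_two_smul_add (hw : w ∈ MExp S p) :
    Upf S ((2⁻¹ : ℝ≥0∞) • (u + w)) = 2⁻¹ * (Upf S u + Upf S w) := by
  have hw' : AEMeasurable w (S.σ.restrict (frontier S.P)) :=
    aemeasurable_of_lowerSemicontinuousOn isClosed_frontier.measurableSet
      (hw.1.mono S.frontier_subset)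
  simp only [Upf, Pi.smul_apply, Pi.add_apply, smul_eq_mul]
  rw [lintegral_const_mul' _ _ (by simp), lintegral_add_right' _ hw']
  ring

lemma MExp.eqOn_interior_of_ae_eq (hu : u ∈ MExp S p) (hw : w ∈ MExp S p)
    (h : u =ᵐ[S.μ.restrict S.P] w) : Set.EqOn u w (interior S.P) := by
  have hcont : ∀ v ∈ MExp S p, ContinuousOn v (interior S.P) := fun v hv =>
    ((MExp.convexFnOn hv).mono interior_subset).continuousOn isOpen_interior S.convex.interior
      fun _ => MExp.ne_top hv
  obtain ⟨c, hc, hμ⟩ := S.exists_mu_restrict_eq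
  have hvol : u =ᵐ[volume.restrict S.P] w := by
    rw [hμ] at h
    exact (Measure.ae_smul_measure_iff hc).1 h
  exact Measure.eqOn_open_of_ae_eq (ae_restrict_of_ae_restrict_of_subset interior_subset hvol)
    isOpen_interior (hcont u hu) (hcont w hw)

lemma MExp.eqOn_interior_of_le_negEntropy (hu : u ∈ MExp S p) (hw : w ∈ MExp S p)
    (hNu : negEntropy S u ≠ ⊤) (hNw : negEntropy S w ≠ ⊤)
    (h : 2⁻¹ * (negEntropy S u + negEntropy S w) ≤ negEntropy S ((2⁻¹ : ℝ≥0∞) • (u + w))) :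
    Set.EqOn u w (interior S.P) := by
  let f : Euc n → ℝ≥0∞ := fun x => eklFun (2⁻¹ * (u x + w x))
  let g : Euc n → ℝ≥0∞ := fun x => 2⁻¹ * (eklFun (u x) + eklFun (w x))
  have hc : (S.μ S.P)⁻¹ ≠ 0 := ENNReal.inv_ne_zero.2 S.mu_ne_top
  have hgm : AEMeasurable g (S.μ.restrict S.P) :=
    ((MExp.aemeasurable_eklFun hu).add (MExp.aemeasurable_eklFun hw)).const_mul _
  have hfg : f ≤ᵐ[S.μ.restrict S.P] g := S.ae_mem_interior.mono fun x hx =>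
    eklFun_inv_two_mul_add_le (MExp.ne_top hu hx) (MExp.ne_top hw hx)
  have hg : (S.μ S.P)⁻¹ * ∫⁻ x in S.P, g x ∂S.μ = 2⁻¹ * (negEntropy S u + negEntropy S w) := by
    rw [lintegral_const_mul' _ _ (by simp), lintegral_add_right' _ (MExp.aemeasurable_eklFun hw),
      negEntropy, negEntropy]
    ring
  have hgf : ∫⁻ x in S.P, g x ∂S.μ ≤ ∫⁻ x in S.P, f x ∂S.μ := by
    rw [← hg] at h
    exact (ENNReal.mul_le_mul_iff_right hc (ENNReal.inv_ne_top.2 S.mu_ne_zero)).1 h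
  have hgt : ∫⁻ x in S.P, g x ∂S.μ ≠ ⊤ := fun ht =>
    ENNReal.mul_ne_top (a := 2⁻¹) (by simp) (ENNReal.add_ne_top.2 ⟨hNu, hNw⟩) <| by
      rw [← hg, ht, ENNReal.mul_top hc]
  have hae := ae_eq_of_ae_le_of_lintegral_le hfg
    (ne_top_of_le_ne_top hgt (lintegral_mono_ae hfg)) hgm hgf
  refine MExp.eqOn_interior_of_ae_eq hu hw ?_
  filter_upwards [S.ae_mem_interior, hae] with x hx hxfg
  by_contra hne
  exact (eklFun_inv_two_mul_add_lt (MExp.ne_top hu hx) (MExp.ne_top hw hx) hne).ne hxfg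

lemma MExp.eqOn_one_of_negEntropy_eq_zero (hu : u ∈ MExp S p) (h : negEntropy S u = 0) :
    Set.EqOn u 1 (interior S.P) :=
  MExp.eqOn_interior_of_le_negEntropy hu S.one_mem_MExp (by simp [h]) (by simp [negEntropy_one])
    (by simp [h, negEntropy_one])

lemma MExp.Upf_one_le (hu : u ∈ MExp S p) (h : Set.EqOn u 1 (interior S.P)) :
    Upf S 1 ≤ Upf S u := by
  obtain ⟨z, hz⟩ := S.simple.1.2.1
  refine mul_le_mul_right (setLIntegral_mono' isClosed_frontier.measurableSet fun x hx => ?_) _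
  have hxP := S.frontier_subset hx
  have hmid : (1 - 2⁻¹ : ℝ) • x + (2⁻¹ : ℝ) • z ∈ interior S.P :=
    S.convex.combo_self_interior_mem_interior hxP hz (by norm_num) (by norm_num) (by norm_num)
  have hle := hu.2.2.1 hxP (interior_subset hz) (t := 2⁻¹) (by norm_num) (by norm_num)
  rw [h hmid, h hz, Pi.one_apply, Pi.one_apply, ENNReal.one_rpow, mul_one] at hle
  by_contra! hlt
  exact (ENNReal.rpow_lt_one hlt (by norm_num)).not_ge hle

end Midpoint

/-! ### Canonical distributions -/

section Canonical

variable {n : ℕ} {S : NSystem n} {T : ℝ≥0} {u w : Euc n → ℝ≥0∞}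

lemma ennreal_eq_and_eq_of_add_le_add {a b a₀ b₀ : ℝ≥0∞} (ha : a₀ ≤ a) (hb : b₀ ≤ b)
    (h : a + b ≤ a₀ + b₀) (ha₀ : a₀ ≠ ⊤) (hb₀ : b₀ ≠ ⊤) : a = a₀ ∧ b = b₀ := by
  constructor
  · exact ha.antisymm' ((ENNReal.add_le_add_iff_right hb₀).1 ((add_le_add_right hb a).trans h))
  · exact hb.antisymm' ((ENNReal.add_le_add_iff_left ha₀).1 ((add_le_add_left ha b).trans h))

lemma IsCanonical.Upf_add_mul_negEntropy_le (hc : IsCanonical S T u) (hw : w ∈ MExp S 1) :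
    Upf S u + T * negEntropy S u ≤ Upf S w + T * negEntropy S w := by
  rcases eq_or_ne T 0 with rfl | hT
  · simpa using (hc.2.2 NNReal.coe_zero).1 w hw
  · have hF := hc.2.1 (NNReal.coe_pos.2 (pos_iff_ne_zero.2 hT)) w hw
    rwa [MExp.Fpf_eq hc.1 (.inl hT), MExp.Fpf_eq hw (.inl hT),
      EReal.coe_ennreal_le_coe_ennreal_iff] at hF

lemma IsCanonical.Upf_add_mul_negEntropy_le_Upf_one (hc : IsCanonical S T u) :
    Upf S u + T * negEntropy S u ≤ Upf S 1 := by
  simpa [negEntropy_one] using hc.Upf_add_mul_negEntropy_le S.one_mem_MExp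

lemma IsCanonical.Upf_le_Upf_one (hc : IsCanonical S T u) : Upf S u ≤ Upf S 1 :=
  le_self_add.trans hc.Upf_add_mul_negEntropy_le_Upf_one

lemma IsCanonical.Upf_ne_top (hc : IsCanonical S T u) : Upf S u ≠ ⊤ :=
  ne_top_of_le_ne_top S.Upf_one_ne_top hc.Upf_le_Upf_one

lemma IsCanonical.negEntropy_ne_top (hc : IsCanonical S T u) : negEntropy S u ≠ ⊤ :=
  MExp.negEntropy_ne_top hc.1 hc.Upf_ne_top

lemma IsCanonical.mul_negEntropy_ne_top (hc : IsCanonical S T u) : T * negEntropy S u ≠ ⊤ :=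
  ENNReal.mul_ne_top ENNReal.coe_ne_top hc.negEntropy_ne_top

lemma IsCanonical.Fpf_eq (hc : IsCanonical S T u) :
    Fpf S T u = ((Upf S u + T * negEntropy S u : ℝ≥0∞) : EReal) :=
  MExp.Fpf_eq hc.1 (.inr hc.negEntropy_ne_top)

lemma IsCanonical.negEntropy_le_of_Upf_le (hc : IsCanonical S 0 u) (hw : w ∈ MExp S 1)
    (hU : Upf S w ≤ Upf S u) : negEntropy S u ≤ negEntropy S w := by
  obtain ⟨hmin, hmax⟩ := hc.2.2 rfl
  have hS := hmax w hw fun v hv => hU.trans (hmin v hv)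
  rwa [MExp.Spf_eq hc.1, MExp.Spf_eq hw, EReal.neg_le_neg_iff,
    EReal.coe_ennreal_le_coe_ennreal_iff] at hS

lemma IsCanonical.negEntropy_le_of_isCanonical_zero (hc : IsCanonical S T u)
    (hw : IsCanonical S 0 w) : negEntropy S u ≤ negEntropy S w := by
  have hU : Upf S w ≤ Upf S u := (hw.2.2 rfl).1 u hc.1
  rcases eq_or_ne T 0 with rfl | hT
  · exact IsCanonical.negEntropy_le_of_Upf_le (by simpa using hc) hw.1 hU
  · have hmul : T * negEntropy S u ≤ T * negEntropy S w :=
      (ENNReal.add_le_add_iff_left hc.Upf_ne_top).1 <|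
        (hc.Upf_add_mul_negEntropy_le hw.1).trans (add_le_add_left hU _)
    exact (ENNReal.mul_le_mul_iff_right (ENNReal.coe_ne_zero.2 hT) ENNReal.coe_ne_top).1 hmul

/-- The midpoint of two minimizers would have smaller free energy, by strict convexity of `-S_𝒫`. -/
theorem IsCanonical.eqOn_interior (hc : IsCanonical S T u) (hw : w ∈ MExp S 1)
    (hF : Upf S w + T * negEntropy S w ≤ Upf S u + T * negEntropy S u)
    (h0 : T = 0 → negEntropy S w ≤ negEntropy S u) : Set.EqOn u w (interior S.P) := by
  have hUw : Upf S w ≠ ⊤ := ne_top_of_le_ne_top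
    (ENNReal.add_ne_top.2 ⟨hc.Upf_ne_top, hc.mul_negEntropy_ne_top⟩) (le_self_add.trans hF)
  have hm := MExp.inv_two_smul_add_mem hc.1 hw
  refine MExp.eqOn_interior_of_le_negEntropy hc.1 hw hc.negEntropy_ne_top
    (MExp.negEntropy_ne_top hw hUw) ?_
  rcases eq_or_ne T 0 with rfl | hT
  · have hUm : Upf S ((2⁻¹ : ℝ≥0∞) • (u + w)) ≤ Upf S u := by
      rw [MExp.Upf_inv_two_smul_add hw, ← ennreal_inv_two_mul_add_self (Upf S u)]
      gcongr
      · exact (ennreal_inv_two_mul_add_self _).le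
      · simpa [ennreal_inv_two_mul_add_self] using hF
    calc 2⁻¹ * (negEntropy S u + negEntropy S w) ≤ 2⁻¹ * (negEntropy S u + negEntropy S u) := by
          gcongr
          exact h0 rfl
      _ = negEntropy S u := ennreal_inv_two_mul_add_self _
      _ ≤ _ := IsCanonical.negEntropy_le_of_Upf_le (by simpa using hc) hm hUm
  · have hUm : 2⁻¹ * (Upf S u + Upf S w) ≠ ⊤ :=
      ENNReal.mul_ne_top (by simp) (ENNReal.add_ne_top.2 ⟨hc.Upf_ne_top, hUw⟩)
    refine (ENNReal.mul_le_mul_iff_right (ENNReal.coe_ne_zero.2 hT) ENNReal.coe_ne_top).1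
      ((ENNReal.add_le_add_iff_left hUm).1 ?_)
    calc 2⁻¹ * (Upf S u + Upf S w) + T * (2⁻¹ * (negEntropy S u + negEntropy S w))
        = 2⁻¹ * ((Upf S u + T * negEntropy S u) + (Upf S w + T * negEntropy S w)) := by ring
      _ ≤ 2⁻¹ * ((Upf S u + T * negEntropy S u) + (Upf S u + T * negEntropy S u)) := by gcongr
      _ = Upf S u + T * negEntropy S u := ennreal_inv_two_mul_add_self _
      _ ≤ _ := by
        rw [← MExp.Upf_inv_two_smul_add hw]
        exact hc.Upf_add_mul_negEntropy_le hm

lemma IsCanonical.Upf_le_of_eqOn_interior (hc : IsCanonical S T u) (hw : w ∈ MExp S 1)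
    (h : Set.EqOn u w (interior S.P)) : Upf S u ≤ Upf S w := by
  have hF := hc.Upf_add_mul_negEntropy_le hw
  rwa [← negEntropy_congr h, ENNReal.add_le_add_iff_right hc.mul_negEntropy_ne_top] at hF

end Canonical

/-! ### Convergence of canonical distributions -/

section Convergence

variable {n : ℕ} {S : NSystem n}

lemma MExp.exists_subseq_tendsto_Upf_negEntropy {p : ℝ} {u : ℕ → Euc n → ℝ≥0∞}
    (hu : ∀ k, u k ∈ MExp S p) {E : ℝ≥0∞} (hE : E ≠ ⊤) (hU : ∀ k, Upf S (u k) ≤ E) :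
    ∃ φ : ℕ → ℕ, StrictMono φ ∧ ∃ w ∈ MExp S 1, ∃ a b : ℝ≥0∞,
      Tendsto (fun k => Upf S (u (φ k))) atTop (𝓝 a) ∧
      Tendsto (fun k => negEntropy S (u (φ k))) atTop (𝓝 b) ∧ Upf S w ≤ a ∧ negEntropy S w ≤ b ∧
      ∀ x ∈ interior S.P, Tendsto (fun k => u (φ k) x) atTop (𝓝 (w x)) := by
  obtain ⟨⟨a, b⟩, φ, hφ, hab⟩ :=
    CompactSpace.tendsto_subseq fun k => (Upf S (u k), negEntropy S (u k))
  obtain ⟨ψ, hψ, w, hw, hlim, hUw⟩ :=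
    MExp.exists_subseq_tendsto (fun k => hu (φ k)) hE fun k => hU (φ k)
  obtain ⟨ha, hb⟩ := (Prod.tendsto_iff _ _).1 (hab.comp hψ.tendsto_atTop)
  have hNw := MExp.negEntropy_le_liminf (fun k => hu (φ (ψ k))) hw hlim
  exact ⟨φ ∘ ψ, hφ.comp hψ, w, hw, a, b, ha, hb, hUw.trans_eq ha.liminf_eq,
    hNw.trans_eq hb.liminf_eq, hlim⟩

section Subsequence

variable {T : ℕ → ℝ≥0} {u : ℕ → Euc n → ℝ≥0∞}

theorem IsCanonical.exists_subseq_tendsto {T₀ : ℝ≥0} {u₀ : Euc n → ℝ≥0∞}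
    (hu : ∀ k, IsCanonical S (T k) (u k)) (h₀ : IsCanonical S T₀ u₀)
    (hT : Tendsto T atTop (𝓝 T₀)) :
    ∃ φ : ℕ → ℕ, (∀ x ∈ interior S.P, Tendsto (fun k => u (φ k) x) atTop (𝓝 (u₀ x))) ∧
      Tendsto (fun k => Upf S (u (φ k))) atTop (𝓝 (Upf S u₀)) ∧
      Tendsto (fun k => negEntropy S (u (φ k))) atTop (𝓝 (negEntropy S u₀)) := by
  obtain ⟨φ, hφ, w, hw, a, b, ha, hb, hUw, hNw, hlim⟩ :=
    MExp.exists_subseq_tendsto_Upf_negEntropy (fun k => (hu k).1) S.Upf_one_ne_top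
      fun k => (hu k).Upf_le_Upf_one
  have hTφ : Tendsto (fun k => (T (φ k) : ℝ≥0∞)) atTop (𝓝 T₀) :=
    ENNReal.tendsto_coe.2 (hT.comp hφ.tendsto_atTop)
  have hb0 : T₀ = 0 → b ≤ negEntropy S u₀ := fun h0 => le_of_tendsto' hb fun k =>
    (hu _).negEntropy_le_of_isCanonical_zero (by simpa [h0] using h₀)
  have hb_top : (T₀ : ℝ≥0∞) ≠ 0 ∨ b ≠ ⊤ := or_iff_not_imp_left.2 fun h0 =>
    ne_top_of_le_ne_top h₀.negEntropy_ne_top (hb0 (by simpa using h0))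
  have hF : a + T₀ * b ≤ Upf S u₀ + T₀ * negEntropy S u₀ :=
    le_of_tendsto_of_tendsto'
      (ha.add (ENNReal.Tendsto.mul hTφ hb_top hb (.inr ENNReal.coe_ne_top)))
      (tendsto_const_nhds.add (ENNReal.Tendsto.mul_const hTφ (.inr h₀.negEntropy_ne_top)))
      fun k => (hu _).Upf_add_mul_negEntropy_le h₀.1
  have heq : Set.EqOn u₀ w (interior S.P) := h₀.eqOn_interior hw
    ((add_le_add hUw (mul_le_mul_right hNw _)).trans hF) fun h0 => hNw.trans (hb0 h0)
  have hNb : negEntropy S u₀ ≤ b := (negEntropy_congr heq).trans_le hNw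
  obtain ⟨rfl, hTb⟩ := ennreal_eq_and_eq_of_add_le_add
    ((h₀.Upf_le_of_eqOn_interior hw heq).trans hUw) (mul_le_mul_right hNb _) hF h₀.Upf_ne_top
    h₀.mul_negEntropy_ne_top
  obtain rfl : b = negEntropy S u₀ := by
    rcases eq_or_ne T₀ 0 with h0 | h0
    · exact (hb0 h0).antisymm hNb
    · exact (ENNReal.mul_right_inj (ENNReal.coe_ne_zero.2 h0) ENNReal.coe_ne_top).1 hTb
  exact ⟨φ, fun x hx => heq hx ▸ hlim x hx, ha, hb⟩

lemma IsCanonical.tendsto_negEntropy_zero (hu : ∀ k, IsCanonical S (T k) (u k))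
    (hT : Tendsto T atTop atTop) : Tendsto (fun k => negEntropy S (u k)) atTop (𝓝 0) := by
  have hdiv : Tendsto (fun k => Upf S 1 / T k) atTop (𝓝 (Upf S 1 / ⊤)) :=
    ENNReal.Tendsto.const_div (ENNReal.tendsto_coe_nhds_top.2 hT) (.inr S.Upf_one_ne_top)
  rw [ENNReal.div_top] at hdiv
  refine tendsto_of_tendsto_of_tendsto_of_le_of_le' tendsto_const_nhds hdiv (.of_forall fun _ =>
    zero_le) ?_
  filter_upwards [hT.eventually_ne_atTop 0] with k hk
  rw [ENNReal.le_div_iff_mul_le (.inl (ENNReal.coe_ne_zero.2 hk)) (.inl ENNReal.coe_ne_top),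
    mul_comm]
  exact le_add_self.trans (hu k).Upf_add_mul_negEntropy_le_Upf_one

theorem IsCanonical.exists_subseq_tendsto_one (hu : ∀ k, IsCanonical S (T k) (u k))
    (hT : Tendsto T atTop atTop) :
    ∃ φ : ℕ → ℕ, (∀ x ∈ interior S.P, Tendsto (fun k => u (φ k) x) atTop (𝓝 1)) ∧
      Tendsto (fun k => Upf S (u (φ k))) atTop (𝓝 (Upf S 1)) := by
  obtain ⟨φ, hφ, w, hw, a, b, ha, hb, hUw, hNw, hlim⟩ :=
    MExp.exists_subseq_tendsto_Upf_negEntropy (fun k => (hu k).1) S.Upf_one_ne_top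
      fun k => (hu k).Upf_le_Upf_one
  obtain rfl : b = 0 := tendsto_nhds_unique hb <|
    (IsCanonical.tendsto_negEntropy_zero hu hT).comp hφ.tendsto_atTop
  have hw1 := MExp.eqOn_one_of_negEntropy_eq_zero hw (nonpos_iff_eq_zero.1 hNw)
  obtain rfl : a = Upf S 1 := le_antisymm (le_of_tendsto' ha fun k => (hu _).Upf_le_Upf_one)
    ((MExp.Upf_one_le hw hw1).trans hUw)
  exact ⟨φ, fun x hx => by simpa [hw1 hx] using hlim x hx, ha⟩

end Subsequence

variable {u : ℝ≥0 → Euc n → ℝ≥0∞} (hu : ∀ T : ℝ≥0, IsCanonical S T (u T))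

include hu

lemma IsCanonical.tendsto_nhds (T₀ : ℝ≥0) {x : Euc n} (hx : x ∈ interior S.P) :
    Tendsto (u · x) (𝓝 T₀) (𝓝 (u T₀ x)) :=
  tendsto_of_subseq_tendsto fun _ hT =>
    (IsCanonical.exists_subseq_tendsto (fun _ => hu _) (hu T₀) hT).imp fun _ h => h.1 x hx

lemma IsCanonical.tendsto_atTop {x : Euc n} (hx : x ∈ interior S.P) :
    Tendsto (u · x) atTop (𝓝 1) :=
  tendsto_of_subseq_tendsto fun _ hT =>
    (IsCanonical.exists_subseq_tendsto_one (fun _ => hu _) hT).imp fun _ h => h.1 x hx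

lemma IsCanonical.continuous_Upf : Continuous fun T => Upf S (u T) :=
  continuous_iff_continuousAt.2 fun T₀ => tendsto_of_subseq_tendsto fun _ hT =>
    (IsCanonical.exists_subseq_tendsto (fun _ => hu _) (hu T₀) hT).imp fun _ h => h.2.1

lemma IsCanonical.continuous_negEntropy : Continuous fun T => negEntropy S (u T) :=
  continuous_iff_continuousAt.2 fun T₀ => tendsto_of_subseq_tendsto fun _ hT =>
    (IsCanonical.exists_subseq_tendsto (fun _ => hu _) (hu T₀) hT).imp fun _ h => h.2.2

lemma IsCanonical.tendsto_Upf_atTop : Tendsto (fun T => Upf S (u T)) atTop (𝓝 (Upf S 1)) :=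
  tendsto_of_subseq_tendsto fun _ hT =>
    (IsCanonical.exists_subseq_tendsto_one (fun _ => hu _) hT).imp fun _ h => h.2

lemma IsCanonical.tendsto_mul_negEntropy_atTop :
    Tendsto (fun T : ℝ≥0 => T * negEntropy S (u T)) atTop (𝓝 0) := by
  have hsub : Tendsto (fun T => Upf S 1 - Upf S (u T)) atTop (𝓝 (Upf S 1 - Upf S 1)) :=
    ENNReal.Tendsto.sub tendsto_const_nhds (IsCanonical.tendsto_Upf_atTop hu)
      (.inl S.Upf_one_ne_top)
  rw [tsub_self] at hsub
  exact tendsto_of_tendsto_of_tendsto_of_le_of_le tendsto_const_nhds hsub (fun _ => zero_le)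
    fun T => ENNReal.le_sub_of_add_le_left (hu T).Upf_ne_top
      (hu T).Upf_add_mul_negEntropy_le_Upf_one

lemma IsCanonical.continuous_Spf : Continuous fun T => Spf S (u T) := by
  simp only [MExp.Spf_eq (hu _).1]
  exact continuous_neg.comp
    (continuous_coe_ennreal_ereal.comp (IsCanonical.continuous_negEntropy hu))

lemma IsCanonical.continuous_Fpf : Continuous fun T : ℝ≥0 => Fpf S T (u T) := by
  simp only [(hu _).Fpf_eq]
  refine continuous_coe_ennreal_ereal.comp <| (IsCanonical.continuous_Upf hu).add <|
    continuous_iff_continuousAt.2 fun T₀ => ENNReal.Tendsto.mul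
      (ENNReal.continuous_coe.tendsto T₀) (.inr (hu T₀).negEntropy_ne_top)
      ((IsCanonical.continuous_negEntropy hu).tendsto T₀) (.inr ENNReal.coe_ne_top)

lemma IsCanonical.tendsto_Fpf_atTop :
    Tendsto (fun T : ℝ≥0 => Fpf S T (u T)) atTop (𝓝 (Upf S 1 : EReal)) := by
  simp only [(hu _).Fpf_eq]
  have hF := (IsCanonical.tendsto_Upf_atTop hu).add (IsCanonical.tendsto_mul_negEntropy_atTop hu)
  rw [add_zero] at hF
  exact (continuous_coe_ennreal_ereal.tendsto _).comp hF

lemma IsCanonical.tendsto_mul_Spf_atTop :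
    Tendsto (fun T : ℝ≥0 => ((T : ℝ) : EReal) * Spf S (u T)) atTop (𝓝 0) := by
  have hneg := (continuous_neg.tendsto _).comp ((continuous_coe_ennreal_ereal.tendsto _).comp
    (IsCanonical.tendsto_mul_negEntropy_atTop hu))
  rw [EReal.coe_ennreal_zero, neg_zero] at hneg
  refine hneg.congr fun T => ?_
  simp [MExp.Spf_eq (hu T).1, EReal.coe_ennreal_mul, EReal.coe_nnreal_eq_coe_real]

lemma IsCanonical.tendsto_lintegral_nhds {p : ℝ} (hp : 1 ≤ p) (hpn : (p - 1) * (n - 1) < 1)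
    (T₀ : ℝ≥0) :
    Tendsto (fun T => ∫⁻ x in S.P, ((u T x - u T₀ x) + (u T₀ x - u T x)) ^ p ∂S.μ) (𝓝 T₀)
      (𝓝 0) :=
  MExp.tendsto_lintegral_tsub_add_tsub_rpow hp hpn (fun T => (hu T).1) (hu T₀).1
    S.Upf_one_ne_top (fun T => (hu T).Upf_le_Upf_one) (hu T₀).Upf_le_Upf_one
    fun _ => IsCanonical.tendsto_nhds hu T₀

lemma IsCanonical.tendsto_lintegral_atTop {p : ℝ} (hp : 1 ≤ p) (hpn : (p - 1) * (n - 1) < 1) :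
    Tendsto (fun T => ∫⁻ x in S.P, ((u T x - 1) + (1 - u T x)) ^ p ∂S.μ) atTop (𝓝 0) :=
  MExp.tendsto_lintegral_tsub_add_tsub_rpow hp hpn (fun T => (hu T).1)
    (S.one_mem_MExp (p := 1)) S.Upf_one_ne_top (fun T => (hu T).Upf_le_Upf_one) le_rfl
    fun _ => IsCanonical.tendsto_atTop hu

end Convergence

lemma tendsto_nhdsWithin_Ici_zero_iff {α : Type*} {f : ℝ → α} {l : Filter α} {a : ℝ}
    (ha : 0 ≤ a) :
    Tendsto f (𝓝[Set.Ici 0] a) l ↔ Tendsto (fun t : ℝ≥0 => f t) (𝓝 ⟨a, ha⟩) l := by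
  rw [nhdsWithin_eq_map_subtype_coe (Set.mem_Ici.2 ha), tendsto_map'_iff]
  rfl

lemma tendsto_atTop_iff_nnreal {α : Type*} {f : ℝ → α} {l : Filter α} :
    Tendsto f atTop l ↔ Tendsto (fun t : ℝ≥0 => f t) atTop l := by
  rw [← NNReal.map_coe_atTop, tendsto_map'_iff]
  rfl

lemma continuousOn_Ici_zero_iff {α : Type*} [TopologicalSpace α] {f : ℝ → α} :
    ContinuousOn f (Set.Ici 0) ↔ Continuous fun t : ℝ≥0 => f t :=
  continuousOn_iff_continuous_domRestrict

/- In dimension `1` the bound `n / (n - 1)` has the junk value `0`, whereas the condition below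
admits every `p`, as it should. -/
theorem canonical_family_continuous_general {n : ℕ} (S : NSystem n)
    (ucan : ℝ → Euc n → ℝ≥0∞)
    (hcan : ∀ T : ℝ, 0 ≤ T → IsCanonical S T (ucan T)) :
    (∀ p : ℝ, 1 ≤ p → (p - 1) * ((n : ℝ) - 1) < 1 →
      (∀ T0 : ℝ, 0 ≤ T0 →
        Tendsto (fun T => ∫⁻ x in S.P,
            ((ucan T x - ucan T0 x) + (ucan T0 x - ucan T x)) ^ p ∂S.μ)
          (𝓝[Set.Ici (0 : ℝ)] T0) (𝓝 0)) ∧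
      Tendsto (fun T => ∫⁻ x in S.P,
          ((ucan T x - 1) + (1 - ucan T x)) ^ p ∂S.μ) atTop (𝓝 0)) ∧
    ContinuousOn (fun T => Fpf S T (ucan T)) (Set.Ici (0 : ℝ)) ∧
    ContinuousOn (fun T => Upf S (ucan T)) (Set.Ici (0 : ℝ)) ∧
    ContinuousOn (fun T => Spf S (ucan T)) (Set.Ici (0 : ℝ)) ∧
    Tendsto (fun T : ℝ => Fpf S T (ucan T)) atTop
      (𝓝 ((Upf S (fun _ => 1) : ℝ≥0∞) : EReal)) ∧
    Tendsto (fun T : ℝ => Upf S (ucan T)) atTop (𝓝 (Upf S (fun _ => 1))) ∧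
    Tendsto (fun T : ℝ => (T : EReal) * Spf S (ucan T)) atTop (𝓝 (0 : EReal)) := by
  have hu : ∀ T : ℝ≥0, IsCanonical S T (ucan T) := fun T => hcan T T.2
  simp only [continuousOn_Ici_zero_iff, tendsto_atTop_iff_nnreal]
  refine ⟨fun p hp hpn => ?_, IsCanonical.continuous_Fpf hu, IsCanonical.continuous_Upf hu,
    IsCanonical.continuous_Spf hu, IsCanonical.tendsto_Fpf_atTop hu,
    IsCanonical.tendsto_Upf_atTop hu, IsCanonical.tendsto_mul_Spf_atTop hu⟩
  exact ⟨fun T₀ hT₀ => (tendsto_nhdsWithin_Ici_zero_iff hT₀).2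
      (IsCanonical.tendsto_lintegral_nhds hu hp hpn ⟨T₀, hT₀⟩),
    IsCanonical.tendsto_lintegral_atTop hu hp hpn⟩

lemma sub_one_mul_sub_one_lt_one {p d : ℝ} (hd : 0 ≤ d) (hp : 1 ≤ p) (hpd : p < d / (d - 1)) :
    (p - 1) * (d - 1) < 1 := by
  have hd1 : 0 < d - 1 := by
    by_contra! h
    linarith [div_nonpos_of_nonneg_of_nonpos hd h]
  linarith [(lt_div_iff₀ hd1).1 hpd]

/-- Continuity of the family of μ-canonical distributions on `[0,∞]` (with
`u_∞^can = 1_P`): `T ↦ u_T^can` is continuous into `L^p(P,μ)` for every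
`p ∈ [1, n/(n−1))` (including at `T = ∞`), the functions `T ↦ F_𝒫(T,u_T^can)`,
`T ↦ U_𝒫(u_T^can)`, `T ↦ S_𝒫(u_T^can)` are continuous on `[0,∞)`, and
`F_𝒫(T,u_T^can) → U_𝒫(1_P)`, `U_𝒫(u_T^can) → U_𝒫(1_P)`, `T·S_𝒫(u_T^can) → 0`
as `T → ∞`. -/
theorem canonical_family_continuous (n : ℕ) (S : NSystem n)
    (ucan : ℝ → Euc n → ℝ≥0∞)
    (hcan : ∀ T : ℝ, 0 ≤ T → IsCanonical S T (ucan T)) :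
    (∀ p : ℝ, 1 ≤ p → p < (n : ℝ) / ((n : ℝ) - 1) →
      (∀ T0 : ℝ, 0 ≤ T0 →
        Tendsto (fun T => ∫⁻ x in S.P,
            ((ucan T x - ucan T0 x) + (ucan T0 x - ucan T x)) ^ p ∂S.μ)
          (𝓝[Set.Ici (0 : ℝ)] T0) (𝓝 0)) ∧
      Tendsto (fun T => ∫⁻ x in S.P,
          ((ucan T x - 1) + (1 - ucan T x)) ^ p ∂S.μ) atTop (𝓝 0)) ∧
    ContinuousOn (fun T => Fpf S T (ucan T)) (Set.Ici (0 : ℝ)) ∧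
    ContinuousOn (fun T => Upf S (ucan T)) (Set.Ici (0 : ℝ)) ∧
    ContinuousOn (fun T => Spf S (ucan T)) (Set.Ici (0 : ℝ)) ∧
    Tendsto (fun T : ℝ => Fpf S T (ucan T)) atTop
      (𝓝 ((Upf S (fun _ => 1) : ℝ≥0∞) : EReal)) ∧
    Tendsto (fun T : ℝ => Upf S (ucan T)) atTop (𝓝 (Upf S (fun _ => 1))) ∧
    Tendsto (fun T : ℝ => (T : EReal) * Spf S (ucan T)) atTop (𝓝 (0 : EReal)) := by
  have general := canonical_family_continuous_general S ucan hcan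
  exact ⟨fun p hp hpn => general.1 p hp (sub_one_mul_sub_one_lt_one n.cast_nonneg hp hpn),
    general.2⟩

end
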